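/- arXiv:0812.2126 — 2 statements merged into one kernel-verified Lean document; each statement's English description precedes it below -/
import Mathlib

section
/- Let ⟨ω₁, …, ω_{n+2}⟩ be an (n+2)-web of hypersurfaces on U whose (n+1)-th form is exact: ω_{n+1} = df for a smooth function f : U → ℝ with nonvanishing differential. Then there exists a unique torsion-free affine connection Γ on U such that the web is geodesic for Γ and f is affine for Γ, i.e. d^s_Γ(df) = 0. -/
open scoped BigOperators

/-- Partial derivative in the `i`-th coordinate direction. -/
noncomputable def pd {n : ℕ} (i : Fin n) (f : (Fin n → ℝ) → ℝ) (x : Fin n → ℝ) : ℝ :=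
  fderiv ℝ f x (Pi.single i 1)

/-- A torsion-free affine connection on `U`, given by its Christoffel symbols `Γ k i j`
(smooth on `U` and symmetric in the lower indices `i j`). -/
def IsTorsionFreeConn {n : ℕ} (U : Set (Fin n → ℝ))
    (Γ : Fin n → Fin n → Fin n → (Fin n → ℝ) → ℝ) : Prop :=
  (∀ k i j, ContDiffOn ℝ (⊤ : ℕ∞) (Γ k i j) U) ∧ (∀ k i j x, Γ k i j x = Γ k j i x)

/-- `γ` is a geodesic of `Γ` on the set `I ⊆ ℝ`, with image in `U`. -/
def IsGeodesicOn {n : ℕ} (U : Set (Fin n → ℝ))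
    (Γ : Fin n → Fin n → Fin n → (Fin n → ℝ) → ℝ)
    (I : Set ℝ) (γ : ℝ → Fin n → ℝ) : Prop :=
  (∀ t ∈ I, γ t ∈ U) ∧ ContDiffOn ℝ 2 γ I ∧
    ∀ t ∈ I, ∀ k, deriv (fun s => deriv (fun u => γ u k) s) t +
      ∑ i, ∑ j, Γ k i j (γ t) * deriv (fun u => γ u i) t * deriv (fun u => γ u j) t = 0

/-- The codimension-one foliation defined by the `1`-form `ω` is totally geodesic for `Γ`:
every geodesic tangent to a leaf at time `0` stays tangent to the kernel of `ω`. -/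
def TotallyGeodesic {n : ℕ} (U : Set (Fin n → ℝ))
    (Γ : Fin n → Fin n → Fin n → (Fin n → ℝ) → ℝ)
    (ω : (Fin n → ℝ) → Fin n → ℝ) : Prop :=
  ∀ I : Set ℝ, IsOpen I → I.OrdConnected → (0 : ℝ) ∈ I →
    ∀ γ : ℝ → Fin n → ℝ, IsGeodesicOn U Γ I γ →
      (∑ k, ω (γ 0) k * deriv (fun u => γ u k) 0) = 0 →
      ∀ t ∈ I, (∑ k, ω (γ t) k * deriv (fun u => γ u k) t) = 0

/-- `ω` is a smooth nonvanishing `1`-form on `U` satisfying the integrability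
condition `ω ∧ dω = 0`. -/
def IsFoliationForm {n : ℕ} (U : Set (Fin n → ℝ)) (ω : (Fin n → ℝ) → Fin n → ℝ) : Prop :=
  ContDiffOn ℝ (⊤ : ℕ∞) ω U ∧ (∀ x ∈ U, ω x ≠ 0) ∧
    ∀ x ∈ U, ∀ i j k,
      ω x i * (pd j (fun y => ω y k) x - pd k (fun y => ω y j) x) +
      ω x j * (pd k (fun y => ω y i) x - pd i (fun y => ω y k) x) +
      ω x k * (pd i (fun y => ω y j) x - pd j (fun y => ω y i) x) = 0

/-- Components of the symmetric covariant differential `d^s_Γ ω`. -/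
noncomputable def dsym {n : ℕ} (Γ : Fin n → Fin n → Fin n → (Fin n → ℝ) → ℝ)
    (ω : (Fin n → ℝ) → Fin n → ℝ) (i j : Fin n) (x : Fin n → ℝ) : ℝ :=
  (pd i (fun y => ω y j) x + pd j (fun y => ω y i) x) / 2 - ∑ k, Γ k i j x * ω x k

/-- Components of the symmetric product `θ·ω` of two `1`-forms. -/
noncomputable def symProd {n : ℕ} (θ ω : (Fin n → ℝ) → Fin n → ℝ) (i j : Fin n) (x : Fin n → ℝ) : ℝ :=
  (θ x i * ω x j + θ x j * ω x i) / 2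

/-- A `d`-web of hypersurfaces on `U`: a family of smooth nonvanishing integrable `1`-forms,
any `n` of which are linearly independent at every point of `U`. -/
def IsWeb {n d : ℕ} (U : Set (Fin n → ℝ)) (ωs : Fin d → (Fin n → ℝ) → Fin n → ℝ) : Prop :=
  (∀ i, IsFoliationForm U (ωs i)) ∧
    ∀ x ∈ U, ∀ σ : Fin n → Fin d, Function.Injective σ →
      LinearIndependent ℝ (fun i => ωs (σ i) x)

/-- `Γ` and `Γ'` are projectively equivalent on `U`:
`Γ'ᵏᵢⱼ = Γᵏᵢⱼ + δᵏᵢ ρⱼ + δᵏⱼ ρᵢ` for some smooth `1`-form `ρ`. -/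
def ProjEquiv {n : ℕ} (U : Set (Fin n → ℝ))
    (Γ Γ' : Fin n → Fin n → Fin n → (Fin n → ℝ) → ℝ) : Prop :=
  ∃ ρ : (Fin n → ℝ) → Fin n → ℝ, ContDiffOn ℝ (⊤ : ℕ∞) ρ U ∧
    ∀ x ∈ U, ∀ k i j, Γ' k i j x =
      Γ k i j x + (if k = i then ρ x j else 0) + (if k = j then ρ x i else 0)

/-- `X` is the frame of vector fields dual to the coframe `ωs` on `U`. -/
def IsDualFrame {n : ℕ} (U : Set (Fin n → ℝ)) (ωs : Fin n → (Fin n → ℝ) → Fin n → ℝ)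
    (X : Fin n → (Fin n → ℝ) → Fin n → ℝ) : Prop :=
  (∀ i, ContDiffOn ℝ (⊤ : ℕ∞) (X i) U) ∧
    ∀ x ∈ U, ∀ i j, (∑ k, ωs i x k * X j x k) = if i = j then 1 else 0

/-- The web invariants `s^a_{ij} = (1/(aᵢ−aⱼ))·(aᵢ ∂ⱼ − aⱼ ∂ᵢ) log (aⱼ/aᵢ)`, where `∂ᵢ`
is derivation along the frame vector field `X i`. -/
noncomputable def sInv {n : ℕ} (X : Fin n → (Fin n → ℝ) → Fin n → ℝ)
    (a : Fin n → (Fin n → ℝ) → ℝ) (i j : Fin n) (x : Fin n → ℝ) : ℝ :=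
  (1 / (a i x - a j x)) *
    (a i x * (fderiv ℝ (a j) x (X j x) / a j x - fderiv ℝ (a i) x (X j x) / a i x) -
     a j x * (fderiv ℝ (a j) x (X i x) / a j x - fderiv ℝ (a i) x (X i x) / a i x))

/-- The curvature tensor `Rᵏₗᵢⱼ` of the connection `Γ`. -/
noncomputable def curv {n : ℕ} (Γ : Fin n → Fin n → Fin n → (Fin n → ℝ) → ℝ)
    (k l i j : Fin n) (x : Fin n → ℝ) : ℝ :=
  pd i (Γ k j l) x - pd j (Γ k i l) x +
    ∑ m, (Γ k i m x * Γ m j l x - Γ k j m x * Γ m i l x)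


section Smoothness

variable {n : ℕ} {U : Set (Fin n → ℝ)}

lemma ContDiffOn.pd_of_isOpen (hU : IsOpen U) {f : (Fin n → ℝ) → ℝ}
    (hf : ContDiffOn ℝ (⊤ : ℕ∞) f U) (i : Fin n) : ContDiffOn ℝ (⊤ : ℕ∞) (pd i f) U :=
  (hf.fderiv_of_isOpen hU (m := ((⊤ : ℕ∞) : WithTop ℕ∞)) (by simp)).clm_apply contDiffOn_const

lemma ContDiffOn.matrix_det {A : (Fin n → ℝ) → Matrix (Fin n) (Fin n) ℝ}
    (hA : ∀ i j, ContDiffOn ℝ (⊤ : ℕ∞) (fun x => A x i j) U) :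
    ContDiffOn ℝ (⊤ : ℕ∞) (fun x => (A x).det) U := by
  simp only [Matrix.det_apply']
  exact ContDiffOn.sum fun σ _ => contDiffOn_const.mul (contDiffOn_prod fun i _ => hA _ _)

lemma ContDiffOn.matrix_inv {A : (Fin n → ℝ) → Matrix (Fin n) (Fin n) ℝ}
    (hA : ∀ i j, ContDiffOn ℝ (⊤ : ℕ∞) (fun x => A x i j) U)
    (hdet : ∀ x ∈ U, (A x).det ≠ 0) (i j : Fin n) :
    ContDiffOn ℝ (⊤ : ℕ∞) (fun x => (A x)⁻¹ i j) U := by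
  simp only [Matrix.inv_def, Ring.inverse_eq_inv', Matrix.smul_apply, Matrix.adjugate_apply,
    smul_eq_mul]
  refine ((ContDiffOn.matrix_det hA).inv hdet).mul (ContDiffOn.matrix_det fun k l => ?_)
  by_cases hk : k = j
  · subst hk
    simpa using contDiffOn_const
  · simpa [Matrix.updateRow_ne hk] using hA k l

end Smoothness

section DSym

variable {n : ℕ} {U : Set (Fin n → ℝ)}

lemma dsym_congr (hU : IsOpen U) (Γ : Fin n → Fin n → Fin n → (Fin n → ℝ) → ℝ)
    {ω η : (Fin n → ℝ) → Fin n → ℝ} (h : ∀ x ∈ U, ω x = η x) {x : Fin n → ℝ} (hx : x ∈ U)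
    (i j : Fin n) : dsym Γ ω i j x = dsym Γ η i j x := by
  have key : ∀ p q, pd p (fun y => ω y q) x = pd p (fun y => η y q) x := fun p q => by
    unfold pd
    rw [Filter.EventuallyEq.fderiv_eq]
    filter_upwards [hU.mem_nhds hx] with y hy
    rw [h y hy]
  simp only [dsym, key, h x hx]

lemma dsym_linear_combination (Γ : Fin n → Fin n → Fin n → (Fin n → ℝ) → ℝ)
    {a : Fin n → (Fin n → ℝ) → ℝ} {w : Fin n → (Fin n → ℝ) → Fin n → ℝ} {x : Fin n → ℝ}
    (ha : ∀ m, DifferentiableAt ℝ (a m) x)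
    (hw : ∀ m k, DifferentiableAt ℝ (fun y => w m y k) x) (p q : Fin n) :
    dsym Γ (fun y k => ∑ m, a m y * w m y k) p q x =
      ∑ m, (a m x * dsym Γ (w m) p q x +
        (pd p (a m) x * w m x q + pd q (a m) x * w m x p) / 2) := by
  have key : ∀ p q, pd p (fun y => ∑ m, a m y * w m y q) x =
      ∑ m, (a m x * pd p (fun y => w m y q) x + pd p (a m) x * w m x q) := fun p q => by
    unfold pd
    rw [fderiv_fun_sum fun m _ => (ha m).fun_mul (hw m q), sum_apply]
    refine Finset.sum_congr rfl fun m _ => ?_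
    rw [fderiv_fun_mul (ha m) (hw m q)]
    simp [mul_comm]
  have hΓ : ∑ k, Γ k p q x * ∑ m, a m x * w m x k =
      ∑ m, a m x * ∑ k, Γ k p q x * w m x k := by
    simp only [Finset.mul_sum]
    rw [Finset.sum_comm]
    exact Finset.sum_congr rfl fun _ _ => Finset.sum_congr rfl fun _ _ => by ring
  simp only [dsym, key, hΓ]
  rw [← Finset.sum_add_distrib, Finset.sum_div, ← Finset.sum_sub_distrib]
  exact Finset.sum_congr rfl fun _ _ => by ring

lemma sum_symm_mul_congr {K g h : Fin n → Fin n → ℝ} (hK : ∀ i j, K i j = K j i)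
    (hgh : ∀ i j, g i j + g j i = h i j + h j i) :
    ∑ i, ∑ j, g i j * K i j = ∑ i, ∑ j, h i j * K i j := by
  have key : ∀ g : Fin n → Fin n → ℝ,
      2 * ∑ i, ∑ j, g i j * K i j = ∑ i, ∑ j, (g i j + g j i) * K i j := fun g => by
    have hswap : ∑ i, ∑ j, g i j * K i j = ∑ i, ∑ j, g j i * K i j := by
      rw [Finset.sum_comm]
      exact Finset.sum_congr rfl fun i _ => Finset.sum_congr rfl fun j _ => by rw [hK]
    rw [two_mul]
    nth_rewrite 2 [hswap]
    simp only [← Finset.sum_add_distrib, add_mul]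
  have hg := key g
  simp only [hgh, ← key h] at hg
  linarith

/-- The symmetric form `∑ᵢ gᵢ · wᵢ`, with `gᵢ = ∑ⱼ gᵢⱼ wⱼ`, only depends on the symmetric part
of `gᵢⱼ`. -/
lemma sum_symProd_congr {w g h : Fin n → Fin n → ℝ}
    (hgh : ∀ i j, g i j + g j i = h i j + h j i) (p q : Fin n) :
    ∑ i, ((∑ j, g i j * w j p) * w i q + (∑ j, g i j * w j q) * w i p) / 2 =
      ∑ i, ((∑ j, h i j * w j p) * w i q + (∑ j, h i j * w j q) * w i p) / 2 := by
  have key : ∀ g : Fin n → Fin n → ℝ,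
      ∑ i, ((∑ j, g i j * w j p) * w i q + (∑ j, g i j * w j q) * w i p) / 2 =
        ∑ i, ∑ j, g i j * ((w j p * w i q + w j q * w i p) / 2) := fun g => by
    refine Finset.sum_congr rfl fun i _ => ?_
    rw [Finset.sum_mul, Finset.sum_mul, ← Finset.sum_add_distrib, Finset.sum_div]
    exact Finset.sum_congr rfl fun j _ => by ring
  rw [key, key]
  exact sum_symm_mul_congr (fun i j => by ring) hgh

end DSym

section Existence

variable {n : ℕ} {U : Set (Fin n → ℝ)}

/-- The coefficients of the symmetric covariant differentials in the web coframe, obtained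
from a family of `2 × 2` linear systems. -/
lemma exists_coframe_coefficients {a b : Fin n → (Fin n → ℝ) → ℝ}
    {A B : Fin n → Fin n → (Fin n → ℝ) → ℝ}
    (ha : ∀ i, ContDiffOn ℝ (⊤ : ℕ∞) (a i) U) (hb : ∀ i, ContDiffOn ℝ (⊤ : ℕ∞) (b i) U)
    (hA : ∀ i j, ContDiffOn ℝ (⊤ : ℕ∞) (A i j) U) (hB : ∀ i j, ContDiffOn ℝ (⊤ : ℕ∞) (B i j) U)
    (ha0 : ∀ x ∈ U, ∀ i, a i x ≠ 0) (hb0 : ∀ x ∈ U, ∀ i, b i x ≠ 0)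
    (hab : ∀ x ∈ U, ∀ i j, i ≠ j → a i x * b j x - a j x * b i x ≠ 0) :
    ∃ (t : Fin n → Fin n → (Fin n → ℝ) → ℝ) (μ : Fin n → (Fin n → ℝ) → ℝ),
      (∀ i j, ContDiffOn ℝ (⊤ : ℕ∞) (t i j) U) ∧ (∀ i, ContDiffOn ℝ (⊤ : ℕ∞) (μ i) U) ∧
      ∀ x ∈ U, ∀ i j,
        (a i x * t i j x + A i j x) + (a j x * t j i x + A j i x) = 0 ∧
        (b i x * t i j x + B i j x) + (b j x * t j i x + B j i x) =
          b i x * μ j x + b j x * μ i x := by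
  set μ : Fin n → (Fin n → ℝ) → ℝ := fun i x => -A i i x / a i x + B i i x / b i x with hμ
  have hμs : ∀ i, ContDiffOn ℝ (⊤ : ℕ∞) (μ i) U := fun i =>
    ((hA i i).neg.div (ha i) (ha0 · · i)).add ((hB i i).div (hb i) (hb0 · · i))
  refine ⟨fun i j x => if i = j then -A i i x / a i x else
    (-(A i j x + A j i x) * b j x -
      a j x * (b i x * μ j x + b j x * μ i x - B i j x - B j i x)) /
      (a i x * b j x - a j x * b i x), μ, fun i j => ?_, hμs, fun x hx i j => ?_⟩
  · by_cases hij : i = j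
    · simp only [if_pos hij]
      exact (hA i i).neg.div (ha i) (ha0 · · i)
    · simp only [if_neg hij]
      refine ContDiffOn.div ?_ (((ha i).mul (hb j)).sub ((ha j).mul (hb i)))
        (hab · · i j hij)
      exact (((hA i j).add (hA j i)).neg.mul (hb j)).sub ((ha j).mul
        (((((hb i).mul (hμs j)).add ((hb j).mul (hμs i))).sub (hB i j)).sub (hB j i)))
  · by_cases hij : i = j
    · subst hij
      have h1 := ha0 x hx i
      have h2 := hb0 x hx i
      simp only [if_true, hμ]
      constructor
      · field_simp
        ring
      · field_simp
    · have h1 := hab x hx i j hij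
      clear_value μ
      simp only [if_neg hij, if_neg (Ne.symm hij)]
      rw [show a j x * b i x - a i x * b j x = -(a i x * b j x - a j x * b i x) by ring, div_neg]
      obtain ⟨d, hd⟩ : ∃ d, a i x * b j x - a j x * b i x = d := ⟨_, rfl⟩
      rw [hd] at h1 ⊢
      constructor <;> (field_simp; rw [← hd]; ring)

lemma ContDiffOn.symProd {θ ω : (Fin n → ℝ) → Fin n → ℝ} (hθ : ContDiffOn ℝ (⊤ : ℕ∞) θ U)
    (hω : ContDiffOn ℝ (⊤ : ℕ∞) ω U) (p q : Fin n) :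
    ContDiffOn ℝ (⊤ : ℕ∞) (symProd θ ω p q) U := by
  have h1 := contDiffOn_pi.1 hθ
  have h2 := contDiffOn_pi.1 hω
  exact (((h1 p).mul (h2 q)).add ((h1 q).mul (h2 p))).div_const 2

/-- Prescribing the symmetric covariant differentials of the members of a coframe determines a
torsion-free connection. -/
lemma exists_connection_of_coframe (hU : IsOpen U) {w θ : Fin n → (Fin n → ℝ) → Fin n → ℝ}
    {P : (Fin n → ℝ) → Matrix (Fin n) (Fin n) ℝ}
    (hw : ∀ m, ContDiffOn ℝ (⊤ : ℕ∞) (w m) U) (hθ : ∀ m, ContDiffOn ℝ (⊤ : ℕ∞) (θ m) U)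
    (hP : ∀ i j, ContDiffOn ℝ (⊤ : ℕ∞) (fun x => P x i j) U)
    (hwP : ∀ x ∈ U, ∀ i j, ∑ k, w i x k * P x k j = if i = j then 1 else 0) :
    ∃ Γ, IsTorsionFreeConn U Γ ∧
      ∀ x ∈ U, ∀ m p q, dsym Γ (w m) p q x = symProd (θ m) (w m) p q x := by
  have hwc := fun m => contDiffOn_pi.1 (hw m)
  refine ⟨fun k p q x => ∑ m, P x k m * ((pd p (fun y => w m y q) x +
    pd q (fun y => w m y p) x) / 2 - symProd (θ m) (w m) p q x), ⟨fun k p q => ?_,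
    fun k p q x => ?_⟩, fun x hx m p q => ?_⟩
  · exact ContDiffOn.sum fun m _ => (hP k m).mul
      (((((hwc m q).pd_of_isOpen hU p).add ((hwc m p).pd_of_isOpen hU q)).div_const 2).sub
        ((hθ m).symProd (hw m) p q))
  · refine Finset.sum_congr rfl fun m _ => ?_
    simp only [symProd]
    ring
  · have h : ∀ c : Fin n → ℝ, ∑ k, (∑ l, P x k l * c l) * w m x k = c m := fun c => by
      simp only [Finset.sum_mul]
      rw [Finset.sum_comm]
      have : ∀ l, ∑ k, P x k l * c l * w m x k = c l * if m = l then 1 else 0 := fun l => by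
        rw [← hwP x hx m l, Finset.mul_sum]
        exact Finset.sum_congr rfl fun k _ => by ring
      simp [this]
    simp only [dsym, h]
    ring

/-- If two `1`-forms have coefficients in general position in a coframe `w`, there is a
torsion-free connection for which the coframe members and the second form are recurrent and the
first form is parallel, all in the symmetrized sense. -/
theorem exists_connection_of_general_position (hU : IsOpen U)
    {w : Fin n → (Fin n → ℝ) → Fin n → ℝ} {a b : Fin n → (Fin n → ℝ) → ℝ}
    {P : (Fin n → ℝ) → Matrix (Fin n) (Fin n) ℝ}
    (hw : ∀ m, ContDiffOn ℝ (⊤ : ℕ∞) (w m) U)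
    (hP : ∀ i j, ContDiffOn ℝ (⊤ : ℕ∞) (fun x => P x i j) U)
    (hwP : ∀ x ∈ U, ∀ i j, ∑ k, w i x k * P x k j = if i = j then 1 else 0)
    (hPw : ∀ x ∈ U, ∀ i j, ∑ k, P x i k * w k x j = if i = j then 1 else 0)
    (ha : ∀ i, ContDiffOn ℝ (⊤ : ℕ∞) (a i) U) (hb : ∀ i, ContDiffOn ℝ (⊤ : ℕ∞) (b i) U)
    (ha0 : ∀ x ∈ U, ∀ i, a i x ≠ 0) (hb0 : ∀ x ∈ U, ∀ i, b i x ≠ 0)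
    (hab : ∀ x ∈ U, ∀ i j, i ≠ j → a i x * b j x - a j x * b i x ≠ 0) :
    ∃ Γ, IsTorsionFreeConn U Γ ∧
      (∀ m, ∃ θ, ContDiffOn ℝ (⊤ : ℕ∞) θ U ∧
        ∀ x ∈ U, ∀ p q, dsym Γ (w m) p q x = symProd θ (w m) p q x) ∧
      (∀ x ∈ U, ∀ p q, dsym Γ (fun y k => ∑ m, a m y * w m y k) p q x = 0) ∧
      ∃ θ, ContDiffOn ℝ (⊤ : ℕ∞) θ U ∧ ∀ x ∈ U, ∀ p q,
        dsym Γ (fun y k => ∑ m, b m y * w m y k) p q x =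
          symProd θ (fun y k => ∑ m, b m y * w m y k) p q x := by
  have hwc := fun m => contDiffOn_pi.1 (hw m)
  have hD : ∀ c : Fin n → (Fin n → ℝ) → ℝ, (∀ i, ContDiffOn ℝ (⊤ : ℕ∞) (c i) U) →
      ∀ i j, ContDiffOn ℝ (⊤ : ℕ∞) (fun x => ∑ l, pd l (c i) x * P x l j) U :=
    fun c hc i j => ContDiffOn.sum fun l _ => ((hc i).pd_of_isOpen hU l).mul (hP l j)
  have hpd : ∀ c : (Fin n → ℝ) → ℝ, ∀ x ∈ U, ∀ p,
      pd p c x = ∑ j, (∑ l, pd l c x * P x l j) * w j x p := fun c x hx p => by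
    simp only [Finset.sum_mul]
    rw [Finset.sum_comm]
    have : ∀ l, ∑ j, pd l c x * P x l j * w j x p = pd l c x * if l = p then 1 else 0 :=
      fun l => by
        rw [← hPw x hx l p, Finset.mul_sum]
        exact Finset.sum_congr rfl fun k _ => by ring
    simp [this]
  obtain ⟨t, μ, ht, hμ, htμ⟩ :=
    exists_coframe_coefficients ha hb (hD a ha) (hD b hb) ha0 hb0 hab
  obtain ⟨Γ, hΓ, hΓw⟩ := exists_connection_of_coframe hU
    (θ := fun m x p => ∑ j, t m j x * w j x p) hw
    (fun m => contDiffOn_pi.2 fun p => ContDiffOn.sum fun j _ => (ht m j).mul (hwc j p)) hP hwP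
  have hsmooth : ∀ {g : (Fin n → ℝ) → ℝ}, ContDiffOn ℝ (⊤ : ℕ∞) g U → ∀ x ∈ U,
      DifferentiableAt ℝ g x := fun hg x hx =>
    (hg.contDiffAt (hU.mem_nhds hx)).differentiableAt (by simp)
  have hcomb : ∀ c : Fin n → (Fin n → ℝ) → ℝ, (∀ i, ContDiffOn ℝ (⊤ : ℕ∞) (c i) U) →
      ∀ x ∈ U, ∀ h : Fin n → Fin n → ℝ,
      (∀ i j, (c i x * t i j x + ∑ l, pd l (c i) x * P x l j) +
        (c j x * t j i x + ∑ l, pd l (c j) x * P x l i) = h i j + h j i) → ∀ p q,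
      dsym Γ (fun y k => ∑ m, c m y * w m y k) p q x =
        ∑ i, ((∑ j, h i j * w j x p) * w i x q + (∑ j, h i j * w j x q) * w i x p) / 2 := by
    intro c hc x hx h hh p q
    rw [dsym_linear_combination Γ (fun m => hsmooth (hc m) x hx)
      (fun m k => hsmooth (hwc m k) x hx), ← sum_symProd_congr hh]
    refine Finset.sum_congr rfl fun m _ => ?_
    rw [hΓw x hx, symProd, hpd (c m) x hx p, hpd (c m) x hx q]
    simp only [add_mul, Finset.sum_add_distrib, mul_assoc (c m x), ← Finset.mul_sum]
    ring
  refine ⟨Γ, hΓ, fun m => ⟨fun x p => ∑ j, t m j x * w j x p,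
    contDiffOn_pi.2 fun p => ContDiffOn.sum fun j _ => (ht m j).mul (hwc j p),
    fun x hx p q => hΓw x hx m p q⟩, fun x hx p q => ?_,
    fun x p => ∑ j, μ j x * w j x p,
    contDiffOn_pi.2 fun p => ContDiffOn.sum fun j _ => (hμ j).mul (hwc j p),
    fun x hx p q => ?_⟩
  · rw [hcomb a ha x hx (fun _ _ => 0) (fun i j => by simpa using (htμ x hx i j).1)]
    simp
  · rw [hcomb b hb x hx (fun i j => b i x * μ j x) (fun i j => (htμ x hx i j).2)]
    simp only [symProd, mul_assoc, ← Finset.mul_sum]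
    rw [← Finset.sum_div, Finset.sum_add_distrib]
    congr 2 <;> rw [Finset.mul_sum] <;> exact Finset.sum_congr rfl fun i _ => by ring

end Existence

section Geodesics

variable {n : ℕ} {U : Set (Fin n → ℝ)} {Γ : Fin n → Fin n → Fin n → (Fin n → ℝ) → ℝ}
  {ω : (Fin n → ℝ) → Fin n → ℝ}

lemma sum_dsym_mul (x v : Fin n → ℝ) :
    ∑ i, ∑ j, dsym Γ ω i j x * (v i * v j) =
      ∑ k, ((∑ i, pd i (fun y => ω y k) x * v i) * v k +
        ω x k * -(∑ i, ∑ j, Γ k i j x * v i * v j)) := by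
  have h1 : ∑ i, ∑ j, ((pd i (fun y => ω y j) x + pd j (fun y => ω y i) x) / 2) * (v i * v j) =
      ∑ i, ∑ j, pd i (fun y => ω y j) x * (v i * v j) :=
    sum_symm_mul_congr (fun i j => mul_comm _ _) (fun i j => by ring)
  have h2 : ∑ i, ∑ j, (∑ k, Γ k i j x * ω x k) * (v i * v j) =
      ∑ k, ω x k * ∑ i, ∑ j, Γ k i j x * v i * v j := by
    simp only [Finset.sum_mul, Finset.mul_sum]
    rw [Finset.sum_comm_cycle.symm.trans Finset.sum_comm_cycle.symm]
    exact Finset.sum_congr rfl fun k _ => Finset.sum_congr rfl fun i _ =>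
      Finset.sum_congr rfl fun j _ => by ring
  have h3 : ∑ i, ∑ j, pd i (fun y => ω y j) x * (v i * v j) =
      ∑ k, (∑ i, pd i (fun y => ω y k) x * v i) * v k := by
    rw [Finset.sum_comm]
    simp only [Finset.sum_mul, mul_assoc]
  simp only [dsym, sub_mul, Finset.sum_sub_distrib, h1, h2, h3, mul_neg, Finset.sum_add_distrib,
    Finset.sum_neg_distrib]
  ring

/-- Along a geodesic, the derivative of `ω(γ̇)` is `(d^s_Γ ω)(γ̇, γ̇)`. -/
lemma IsGeodesicOn.hasDerivAt_form (hU : IsOpen U) (hω : ContDiffOn ℝ (⊤ : ℕ∞) ω U)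
    {I : Set ℝ} (hI : IsOpen I) {γ : ℝ → Fin n → ℝ} (hγ : IsGeodesicOn U Γ I γ) {t : ℝ}
    (ht : t ∈ I) :
    HasDerivAt (fun s => ∑ k, ω (γ s) k * deriv (fun u => γ u k) s)
      (∑ i, ∑ j, dsym Γ ω i j (γ t) *
        (deriv (fun u => γ u i) t * deriv (fun u => γ u j) t)) t := by
  obtain ⟨hmem, hC, hgeo⟩ := hγ
  have hCk := contDiffOn_pi.1 hC
  have hγd : ∀ k, HasDerivAt (fun u => γ u k) (deriv (fun u => γ u k) t) t := fun k =>
    (((hCk k).contDiffAt (hI.mem_nhds ht)).differentiableAt (by simp)).hasDerivAt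
  have hγdd : ∀ k, HasDerivAt (fun s => deriv (fun u => γ u k) s)
      (-(∑ i, ∑ j, Γ k i j (γ t) * deriv (fun u => γ u i) t * deriv (fun u => γ u j) t)) t := by
    intro k
    have h : ContDiffOn ℝ 1 (deriv fun u => γ u k) I :=
      ((contDiffOn_succ_iff_deriv_of_isOpen (n := 1) hI).1 (hCk k)).2.2
    rw [← eq_neg_of_add_eq_zero_left (hgeo t ht k)]
    exact ((h.contDiffAt (hI.mem_nhds ht)).differentiableAt (by simp)).hasDerivAt
  have hωd : ∀ k, HasDerivAt (fun s => ω (γ s) k)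
      (∑ i, pd i (fun y => ω y k) (γ t) * deriv (fun u => γ u i) t) t := by
    intro k
    have h := (((contDiffOn_pi.1 hω k).contDiffAt
      (hU.mem_nhds (hmem t ht))).differentiableAt (by simp)).hasFDerivAt.comp_hasDerivAt t
        (hasDerivAt_pi.2 hγd)
    refine h.congr_deriv (Eq.symm ?_)
    rw [← ContinuousLinearMap.coe_coe, LinearMap.pi_apply_eq_sum_univ]
    refine Finset.sum_congr rfl fun i _ => ?_
    simp only [pd, smul_eq_mul, ContinuousLinearMap.coe_coe, mul_comm]
    congr 2
    ext j
    simp [Pi.single_apply, eq_comm]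
  rw [sum_dsym_mul]
  exact HasDerivAt.fun_sum fun k _ => (hωd k).mul (hγdd k)

lemma eqOn_zero_of_hasDerivAt_mul_self {I : Set ℝ} (hI : IsOpen I) (hIc : I.OrdConnected)
    {g c : ℝ → ℝ} (hc : ContinuousOn c I) (hg : ∀ t ∈ I, HasDerivAt g (c t * g t) t)
    {s : ℝ} (hs : s ∈ I) (hgs : g s = 0) {t : ℝ} (ht : t ∈ I) : g t = 0 := by
  have hF : ∀ u ∈ I, HasDerivAt (fun u => ∫ x in s..u, c x) (c u) u := fun u hu =>
    intervalIntegral.integral_hasDerivAt_right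
      ((hc.mono (hIc.uIcc_subset hs hu)).intervalIntegrable)
      (hc.stronglyMeasurableAtFilter hI u hu) (hc.continuousAt (hI.mem_nhds hu))
  have hd : ∀ u ∈ I, HasDerivAt (fun u => Real.exp (-∫ x in s..u, c x) * g u) 0 u :=
    fun u hu => by
      refine ((hF u hu).fun_neg.exp.mul (hg u hu)).congr_deriv ?_
      ring
  have h := hI.is_const_of_deriv_eq_zero hIc.isPreconnected
    (fun u hu => (hd u hu).differentiableAt.differentiableWithinAt)
    (fun u hu => (hd u hu).deriv) ht hs
  simpa [hgs] using h

lemma totallyGeodesic_of_dsym_eq_symProd (hU : IsOpen U) (hω : ContDiffOn ℝ (⊤ : ℕ∞) ω U)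
    {θ : (Fin n → ℝ) → Fin n → ℝ} (hθ : ContDiffOn ℝ (⊤ : ℕ∞) θ U)
    (h : ∀ x ∈ U, ∀ i j, dsym Γ ω i j x = symProd θ ω i j x) : TotallyGeodesic U Γ ω := by
  intro I hI hIc h0 γ hγ hγ0 t ht
  refine eqOn_zero_of_hasDerivAt_mul_self hI hIc
    (g := fun t => ∑ k, ω (γ t) k * deriv (fun u => γ u k) t)
    (c := fun t => ∑ i, θ (γ t) i * deriv (fun u => γ u i) t) ?_ (fun s hs => ?_) h0 hγ0 ht
  · refine continuousOn_finsetSum _ fun i _ => ContinuousOn.mul ?_ ?_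
    · exact (contDiffOn_pi.1 hθ i).continuousOn.comp hγ.2.1.continuousOn hγ.1
    · exact (contDiffOn_pi.1 hγ.2.1 i).continuousOn_deriv_of_isOpen hI (by simp)
  · refine (hγ.hasDerivAt_form hU hω hI hs).congr_deriv ?_
    simp only [h _ (hγ.1 s hs), Finset.sum_mul_sum]
    rw [sum_symm_mul_congr (h := fun i j => θ (γ s) i * ω (γ s) j)
      (fun i j => mul_comm _ _) (fun i j => by simp only [symProd]; ring)]
    exact Finset.sum_congr rfl fun i _ => Finset.sum_congr rfl fun j _ => by ring

/-- Geodesics exist for short time, with any initial position and velocity. -/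
lemma IsTorsionFreeConn.exists_geodesic (hU : IsOpen U) (hΓ : IsTorsionFreeConn U Γ)
    {x : Fin n → ℝ} (hx : x ∈ U) (v : Fin n → ℝ) :
    ∃ ε > 0, ∃ γ : ℝ → Fin n → ℝ, IsGeodesicOn U Γ (Set.Ioo (-ε) ε) γ ∧ γ 0 = x ∧
      ∀ k, deriv (fun u => γ u k) 0 = v k := by
  set F : (Fin n → ℝ) × (Fin n → ℝ) → (Fin n → ℝ) × (Fin n → ℝ) := fun z =>
    (z.2, fun k => -∑ i, ∑ j, Γ k i j z.1 * z.2 i * z.2 j) with hFdef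
  have hF : ContDiffOn ℝ 1 F (U ×ˢ Set.univ) := by
    have hsnd : ∀ i, ContDiffOn ℝ 1 (fun z : (Fin n → ℝ) × (Fin n → ℝ) => z.2 i)
        (U ×ˢ Set.univ) := fun i => contDiffOn_pi.1 contDiffOn_snd i
    refine contDiffOn_snd.prodMk (contDiffOn_pi.2 fun k => ContDiffOn.neg <|
      ContDiffOn.sum fun i _ => ContDiffOn.sum fun j _ => (ContDiffOn.mul ?_ (hsnd i)).mul
        (hsnd j))
    exact ((hΓ.1 k i j).of_le (by exact_mod_cast le_top)).comp contDiffOn_fst fun z hz => hz.1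
  have hopen : IsOpen (U ×ˢ (Set.univ : Set (Fin n → ℝ))) := hU.prod isOpen_univ
  obtain ⟨r, hr, ε, hε, hα⟩ :=
    ContDiffAt.exists_forall_mem_closedBall_exists_eq_forall_mem_Ioo_hasDerivAt (hF.contDiffAt (hopen.mem_nhds (show (x, v) ∈ _ from ⟨hx, trivial⟩))) 0
  obtain ⟨α, hα0, hαd⟩ := hα (x, v) (Metric.mem_closedBall_self hr.le)
  have hcont : ContinuousAt α 0 := (hαd 0 (by simp [hε])).continuousAt
  obtain ⟨δ, hδ, hδU⟩ := Metric.mem_nhds_iff.1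
    (hcont.preimage_mem_nhds (hopen.mem_nhds (by rw [hα0]; exact ⟨hx, trivial⟩)))
  have hsub : ∀ t ∈ Set.Ioo (-min ε δ) (min ε δ), α t ∈ U ×ˢ (Set.univ : Set (Fin n → ℝ)) ∧
      HasDerivAt α (F (α t)) t := fun t ht => by
    obtain ⟨h1, h2⟩ := abs_lt.1 ((abs_lt.2 ht).trans_le (min_le_left ε δ))
    exact ⟨hδU (by simpa using (abs_lt.2 ht).trans_le (min_le_right ε δ)),
      hαd t ⟨by linarith, by linarith⟩⟩
  have hpos : 0 < min ε δ := lt_min hε hδ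
  have hd1 : ∀ t ∈ Set.Ioo (-min ε δ) (min ε δ), HasDerivAt (fun u => (α u).1) (α t).2 t :=
    fun t ht => (hsub t ht).2.fst
  have hd1k : ∀ t ∈ Set.Ioo (-min ε δ) (min ε δ), ∀ k,
      deriv (fun u => (α u).1 k) t = (α t).2 k :=
    fun t ht k => (hasDerivAt_pi.1 (hd1 t ht) k).deriv
  have hαC : ContinuousOn α (Set.Ioo (-min ε δ) (min ε δ)) := fun t ht =>
    (hsub t ht).2.continuousAt.continuousWithinAt
  have hαC1 : ContDiffOn ℝ 1 α (Set.Ioo (-min ε δ) (min ε δ)) := by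
    refine (contDiffOn_succ_iff_deriv_of_isOpen (n := 0) isOpen_Ioo).2
      ⟨fun t ht => (hsub t ht).2.differentiableAt.differentiableWithinAt, by simp,
        contDiffOn_zero.2 ?_⟩
    exact (hF.continuousOn.comp hαC fun t ht => (hsub t ht).1).congr fun t ht =>
      (hsub t ht).2.deriv
  refine ⟨min ε δ, hpos, fun u => (α u).1, ⟨fun t ht => (hsub t ht).1.1, ?_, fun t ht k => ?_⟩,
    congrArg Prod.fst hα0, fun k => by rw [hd1k 0 ⟨by linarith, hpos⟩, hα0]⟩
  · refine (contDiffOn_succ_iff_deriv_of_isOpen (n := 1) isOpen_Ioo).2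
      ⟨fun t ht => (hd1 t ht).differentiableAt.differentiableWithinAt, by simp, ?_⟩
    exact hαC1.snd.congr fun t ht => (hd1 t ht).deriv
  · have h2 : HasDerivAt (fun s => deriv (fun u => (α u).1 k) s) ((F (α t)).2 k) t := by
      refine (hasDerivAt_pi.1 (hsub t ht).2.snd k).congr_of_eventuallyEq ?_
      filter_upwards [isOpen_Ioo.mem_nhds ht] with s hs using hd1k s hs k
    rw [h2.deriv]
    simp only [hd1k t ht, hFdef]
    ring

lemma TotallyGeodesic.sum_dsym_eq_zero (hU : IsOpen U) (hΓ : IsTorsionFreeConn U Γ)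
    (hω : ContDiffOn ℝ (⊤ : ℕ∞) ω U) (h : TotallyGeodesic U Γ ω) {x : Fin n → ℝ} (hx : x ∈ U)
    {v : Fin n → ℝ} (hv : ∑ k, ω x k * v k = 0) :
    ∑ i, ∑ j, dsym Γ ω i j x * (v i * v j) = 0 := by
  obtain ⟨ε, hε, γ, hγ, rfl, hγv⟩ := hΓ.exists_geodesic hU hx v
  have h0 : (0 : ℝ) ∈ Set.Ioo (-ε) ε := ⟨by linarith, hε⟩
  have hd := hγ.hasDerivAt_form hU hω isOpen_Ioo h0
  simp only [hγv] at hd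
  refine hd.unique ((hasDerivAt_const (0 : ℝ) (0 : ℝ)).congr_of_eventuallyEq ?_)
  filter_upwards [isOpen_Ioo.mem_nhds h0] with t ht
  exact h _ isOpen_Ioo Set.ordConnected_Ioo h0 γ hγ (by simpa only [hγv] using hv) t ht

end Geodesics

section Uniqueness

open Matrix

variable {n : ℕ}

lemma dotProduct_mulVec_single_add_single (s : Matrix (Fin n) (Fin n) ℝ) (j k : Fin n) (c d : ℝ) :
    (Pi.single j c + Pi.single k d) ⬝ᵥ (s *ᵥ (Pi.single j c + Pi.single k d)) =
      c * c * s j j + c * d * (s j k + s k j) + d * d * s k k := by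
  simp only [mulVec_add, add_dotProduct, dotProduct_add, single_dotProduct, mulVec_single,
    Pi.smul_apply, MulOpposite.smul_eq_mul_unop, MulOpposite.unop_op, col_apply]
  ring

/-- A vector-valued symmetric bilinear form preserving the coordinate hyperplanes and a further
hyperplane in general position, and with values in another such hyperplane, vanishes. -/
lemma eq_zero_of_general_position {s : Fin n → Matrix (Fin n) (Fin n) ℝ} {a b : Fin n → ℝ}
    (hs : ∀ m, (s m).IsSymm) (ha0 : ∀ i, a i ≠ 0) (hb0 : ∀ i, b i ≠ 0)
    (hab : ∀ i j, i ≠ j → a i * b j - a j * b i ≠ 0)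
    (hcoord : ∀ m u, u m = 0 → u ⬝ᵥ (s m *ᵥ u) = 0)
    (ha : ∑ m, a m • s m = 0)
    (hb : ∀ u, b ⬝ᵥ u = 0 → u ⬝ᵥ ((∑ m, b m • s m) *ᵥ u) = 0) (m : Fin n) : s m = 0 := by
  have hsym : ∀ m j k, s m j k = s m k j := fun m j k => (hs m).apply k j
  have hoff_diag : ∀ m j, j ≠ m → s m j j = 0 := fun m j hj => by
    have h := hcoord m (Pi.single j 1 + Pi.single j 0) (by simp [hj.symm])
    rw [dotProduct_mulVec_single_add_single] at h
    linarith
  have hoff : ∀ m j k, j ≠ m → k ≠ m → s m j k = 0 := fun m j k hj hk => by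
    have h := hcoord m (Pi.single j 1 + Pi.single k 1) (by simp [hj.symm, hk.symm])
    rw [dotProduct_mulVec_single_add_single, hoff_diag m j hj, hoff_diag m k hk, hsym m k j] at h
    linarith
  have hsum : ∀ c : Fin n → ℝ, ∀ j k, j ≠ k →
      (∑ m, c m • s m) j k = c j * s j j k + c k * s k j k := fun c j k hjk => by
    rw [Matrix.sum_apply, ← Finset.sum_subset (Finset.subset_univ {j, k}), Finset.sum_pair hjk]
    · simp
    · intro m _ hm
      simp only [Finset.mem_insert, Finset.mem_singleton, not_or] at hm
      simp [hoff m j k (Ne.symm hm.1) (Ne.symm hm.2)]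
  have hdiag : ∀ m j, s m j j = 0 := fun m j => by
    by_cases hj : j = m
    · subst hj
      have h := congrFun (congrFun ha j) j
      rw [Matrix.sum_apply, Finset.sum_eq_single j
        (fun m _ hm => by simp [hoff m j j hm.symm hm.symm]) (by simp)] at h
      simpa [ha0 j] using h
    · exact hoff m j j hj hj
  have hpair : ∀ j k, j ≠ k → s j j k = 0 := fun j k hjk => by
    have h1 := congrFun (congrFun ha j) k
    rw [hsum a j k hjk, Matrix.zero_apply] at h1
    have h2 := hb (Pi.single j (b k) + Pi.single k (-b j)) (by
      simp only [dotProduct_add, dotProduct_single]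
      ring)
    have hz : ∀ i, (∑ m, b m • s m) i i = 0 := fun i => by
      rw [Matrix.sum_apply]
      exact Finset.sum_eq_zero fun m _ => by simp [hdiag]
    rw [dotProduct_mulVec_single_add_single, hz, hz, hsum b j k hjk, hsum b k j hjk.symm,
      hsym k k j, hsym j k j] at h2
    have h3 : b j * s j j k + b k * s k j k = 0 := by
      refine (mul_eq_zero.1 (?_ : (b k * b j) * (b j * s j j k + b k * s k j k) = 0)).resolve_left
        (mul_ne_zero (hb0 k) (hb0 j))
      linear_combination (-1 / 2) * h2
    refine (mul_eq_zero.1 (?_ : (a j * b k - a k * b j) * s j j k = 0)).resolve_left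
      (hab j k hjk)
    linear_combination b k * h1 - a k * h3
  ext j k
  by_cases hj : j = m
  · subst hj
    by_cases hk : k = j
    · subst hk
      exact hdiag _ _
    · exact hpair _ _ (Ne.symm hk)
  · by_cases hk : k = m
    · subst hk
      rw [hsym]
      exact hpair _ _ (Ne.symm hj)
    · exact hoff m j k hj hk

/-- The contraction of a tensor `S k i j` with a covector, as a matrix in `i j`. -/
def contraction (S : Fin n → Fin n → Fin n → ℝ) (ω : Fin n → ℝ) : Matrix (Fin n) (Fin n) ℝ :=
  of fun i j => ∑ k, S k i j * ω k

lemma contraction_vecMul (S : Fin n → Fin n → Fin n → ℝ) (c : Fin n → ℝ)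
    (W : Matrix (Fin n) (Fin n) ℝ) :
    contraction S (c ᵥ* W) = ∑ m, c m • contraction S (W m) := by
  ext i j
  simp only [contraction, of_apply, vecMul, dotProduct, Matrix.sum_apply, Matrix.smul_apply,
    smul_eq_mul, Finset.mul_sum]
  rw [Finset.sum_comm]
  exact Finset.sum_congr rfl fun _ _ => Finset.sum_congr rfl fun _ _ => by ring

theorem tensor_eq_zero_of_general_position {S : Fin n → Fin n → Fin n → ℝ}
    {W P : Matrix (Fin n) (Fin n) ℝ} {α β : Fin n → ℝ} (hWP : W * P = 1)
    (hS : ∀ k i j, S k i j = S k j i)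
    (ha0 : ∀ i, (α ᵥ* P) i ≠ 0) (hb0 : ∀ i, (β ᵥ* P) i ≠ 0)
    (hab : ∀ i j, i ≠ j → (α ᵥ* P) i * (β ᵥ* P) j - (α ᵥ* P) j * (β ᵥ* P) i ≠ 0)
    (hW : ∀ m v, W m ⬝ᵥ v = 0 → v ⬝ᵥ (contraction S (W m) *ᵥ v) = 0)
    (hα : contraction S α = 0)
    (hβ : ∀ v, β ⬝ᵥ v = 0 → v ⬝ᵥ (contraction S β *ᵥ v) = 0) (k i j : Fin n) :
    S k i j = 0 := by
  have hPW : P * W = 1 := mul_eq_one_comm.1 hWP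
  have hrec : ∀ ω : Fin n → ℝ, (ω ᵥ* P) ᵥ* W = ω := fun ω => by
    rw [vecMul_vecMul, hPW, vecMul_one]
  have hquad : ∀ (N : Matrix (Fin n) (Fin n) ℝ) (u : Fin n → ℝ),
      u ⬝ᵥ ((Pᵀ * N * P) *ᵥ u) = (P *ᵥ u) ⬝ᵥ (N *ᵥ (P *ᵥ u)) := fun N u => by
    rw [← mulVec_mulVec, ← mulVec_mulVec, dotProduct_mulVec u, vecMul_transpose]
  have hlin : ∀ ω : Fin n → ℝ, ∑ m, (ω ᵥ* P) m • (Pᵀ * contraction S (W m) * P) =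
      Pᵀ * contraction S ω * P := fun ω => by
    conv_rhs => rw [← hrec ω, contraction_vecMul, Finset.mul_sum, Finset.sum_mul]
    simp
  have hzero : ∀ m, Pᵀ * contraction S (W m) * P = 0 := by
    refine eq_zero_of_general_position (fun m => ?_) ha0 hb0 hab (fun m u hu => ?_) ?_
      (fun u hu => ?_)
    · have hsymm : (contraction S (W m))ᵀ = contraction S (W m) := by
        ext p q
        simp only [contraction, transpose_apply, of_apply, hS _ p q]
      rw [Matrix.IsSymm, transpose_mul, transpose_mul, transpose_transpose, hsymm, mul_assoc]
    · rw [hquad]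
      refine hW m _ ?_
      change (W *ᵥ (P *ᵥ u)) m = 0
      rw [mulVec_mulVec, hWP, one_mulVec, hu]
    · rw [hlin, hα]
      simp
    · rw [hlin, hquad]
      exact hβ _ (by rw [dotProduct_mulVec, hu])
  have hcW : ∀ m, contraction S (W m) = 0 := fun m => by
    have hPt : Wᵀ * Pᵀ = 1 := by rw [← transpose_mul, hPW, transpose_one]
    calc contraction S (W m) = (Wᵀ * Pᵀ) * contraction S (W m) * (P * W) := by
          rw [hPt, hPW, one_mul, mul_one]
      _ = Wᵀ * (Pᵀ * contraction S (W m) * P) * W := by simp only [mul_assoc]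
      _ = 0 := by rw [hzero]; simp
  have h := congrFun (congrFun (contraction_vecMul S (Pi.single k 1 ᵥ* P) W) i) j
  simp only [hrec, hcW, smul_zero, Finset.sum_const_zero] at h
  simpa [contraction, Pi.single_apply] using h

end Uniqueness

section Web

open Matrix

variable {n : ℕ} {U : Set (Fin n → ℝ)} {ωs : Fin (n + 2) → (Fin n → ℝ) → Fin n → ℝ}

lemma IsWeb.eq_zero_of_dotProduct {d : ℕ} {ωs : Fin d → (Fin n → ℝ) → Fin n → ℝ}
    (hweb : IsWeb U ωs) {x : Fin n → ℝ} (hx : x ∈ U) {σ : Fin n → Fin d}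
    (hσ : Function.Injective σ) {v : Fin n → ℝ} (hv : ∀ i, ωs (σ i) x ⬝ᵥ v = 0) : v = 0 := by
  have hunit : IsUnit (of fun i => ωs (σ i) x) :=
    linearIndependent_rows_iff_isUnit.1 (hweb.2 x hx σ hσ)
  refine mulVec_injective_iff_isUnit.2 hunit ?_
  ext i
  simpa [mulVec] using hv i

/-- The matrix of the first `n` forms of a web. -/
def webCoframe (ωs : Fin (n + 2) → (Fin n → ℝ) → Fin n → ℝ) (x : Fin n → ℝ) :
    Matrix (Fin n) (Fin n) ℝ :=
  of fun i => ωs (Fin.castAdd 2 i) x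

lemma IsWeb.webCoframe_mul_inv (hweb : IsWeb U ωs) {x : Fin n → ℝ} (hx : x ∈ U) :
    webCoframe ωs x * (webCoframe ωs x)⁻¹ = 1 := by
  have hunit : IsUnit (webCoframe ωs x) :=
    linearIndependent_rows_iff_isUnit.1 (hweb.2 x hx _ (Fin.castAdd_injective n 2))
  exact mul_nonsing_inv _ ((isUnit_iff_isUnit_det _).1 hunit)

lemma IsWeb.inv_mul_webCoframe (hweb : IsWeb U ωs) {x : Fin n → ℝ} (hx : x ∈ U) :
    (webCoframe ωs x)⁻¹ * webCoframe ωs x = 1 :=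
  mul_eq_one_comm.1 (hweb.webCoframe_mul_inv hx)

lemma IsWeb.castAdd_dotProduct_inv_mulVec (hweb : IsWeb U ωs) {x : Fin n → ℝ} (hx : x ∈ U)
    (u : Fin n → ℝ) (m : Fin n) :
    ωs (Fin.castAdd 2 m) x ⬝ᵥ ((webCoframe ωs x)⁻¹ *ᵥ u) = u m := by
  change (webCoframe ωs x *ᵥ ((webCoframe ωs x)⁻¹ *ᵥ u)) m = u m
  rw [mulVec_mulVec, hweb.webCoframe_mul_inv hx, one_mulVec]

lemma IsWeb.inv_mulVec_ne_zero (hweb : IsWeb U ωs) {x : Fin n → ℝ} (hx : x ∈ U)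
    {u : Fin n → ℝ} {m : Fin n} (hu : u m ≠ 0) : (webCoframe ωs x)⁻¹ *ᵥ u ≠ 0 := fun h => by
  have := hweb.castAdd_dotProduct_inv_mulVec hx u m
  rw [h, dotProduct_zero] at this
  exact hu this.symm

lemma IsWeb.coeff_ne_zero (hweb : IsWeb U ωs) {x : Fin n → ℝ} (hx : x ∈ U) {e : Fin (n + 2)}
    (he : ∀ m : Fin n, Fin.castAdd 2 m ≠ e) (i : Fin n) :
    (ωs e x ᵥ* (webCoframe ωs x)⁻¹) i ≠ 0 := by
  intro h
  refine hweb.inv_mulVec_ne_zero hx (u := Pi.single i 1) (m := i) (by simp)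
    (hweb.eq_zero_of_dotProduct hx (σ := Function.update (Fin.castAdd 2) i e) ?_ fun m => ?_)
  · intro p q hpq
    by_cases hp : p = i <;> by_cases hq : q = i <;>
      simp_all [(he _).symm]
  · by_cases hm : m = i
    · subst hm
      rw [Function.update_self, dotProduct_mulVec, dotProduct_single, h, zero_mul]
    · rw [Function.update_of_ne hm, hweb.castAdd_dotProduct_inv_mulVec hx, Pi.single_eq_of_ne hm]

lemma IsWeb.coeff_minor_ne_zero (hweb : IsWeb U ωs) {x : Fin n → ℝ} (hx : x ∈ U)
    {e e' : Fin (n + 2)} (hee : e ≠ e') (he : ∀ m : Fin n, Fin.castAdd 2 m ≠ e)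
    (he' : ∀ m : Fin n, Fin.castAdd 2 m ≠ e') (i j : Fin n) (hij : i ≠ j) :
    (ωs e x ᵥ* (webCoframe ωs x)⁻¹) i * (ωs e' x ᵥ* (webCoframe ωs x)⁻¹) j -
      (ωs e x ᵥ* (webCoframe ωs x)⁻¹) j * (ωs e' x ᵥ* (webCoframe ωs x)⁻¹) i ≠ 0 := by
  intro h
  set a := ωs e x ᵥ* (webCoframe ωs x)⁻¹ with ha
  set b := ωs e' x ᵥ* (webCoframe ωs x)⁻¹ with hb
  have haj : a j ≠ 0 := hweb.coeff_ne_zero hx he j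
  refine hweb.inv_mulVec_ne_zero hx (u := Pi.single i (a j) + Pi.single j (-a i)) (m := i)
    (by simpa [hij] using haj) (hweb.eq_zero_of_dotProduct hx
      (σ := Function.update (Function.update (Fin.castAdd 2) j e') i e) ?_ fun m => ?_)
  · intro p q hpq
    by_cases hp : p = i <;> by_cases hq : q = i <;> by_cases hp' : p = j <;>
      by_cases hq' : q = j <;>
      simp_all [Function.update_apply, (he _).symm, (he' _).symm, hee.symm]
  · by_cases hm : m = i
    · subst hm
      rw [Function.update_self, dotProduct_mulVec, ← ha, dotProduct_add, dotProduct_single,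
        dotProduct_single]
      ring
    · rw [Function.update_of_ne hm]
      by_cases hm' : m = j
      · subst hm'
        rw [Function.update_self, dotProduct_mulVec, ← hb, dotProduct_add, dotProduct_single,
          dotProduct_single]
        linear_combination -h
      · rw [Function.update_of_ne hm', hweb.castAdd_dotProduct_inv_mulVec hx]
        simp [hm, hm']

lemma IsWeb.sum_coeff_mul (hweb : IsWeb U ωs) {x : Fin n → ℝ} (hx : x ∈ U) (e : Fin (n + 2)) :
    (fun k => ∑ m, (ωs e x ᵥ* (webCoframe ωs x)⁻¹) m * ωs (Fin.castAdd 2 m) x k) = ωs e x := by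
  change (ωs e x ᵥ* (webCoframe ωs x)⁻¹) ᵥ* webCoframe ωs x = ωs e x
  rw [vecMul_vecMul, hweb.inv_mul_webCoframe hx, vecMul_one]

lemma IsWeb.contDiffOn_apply (hweb : IsWeb U ωs) (e : Fin (n + 2)) (k : Fin n) :
    ContDiffOn ℝ (⊤ : ℕ∞) (fun x => ωs e x k) U :=
  contDiffOn_pi.1 (hweb.1 e).1 k

lemma IsWeb.contDiffOn_inv (hweb : IsWeb U ωs) (i j : Fin n) :
    ContDiffOn ℝ (⊤ : ℕ∞) (fun x => (webCoframe ωs x)⁻¹ i j) U :=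
  ContDiffOn.matrix_inv (fun p q => hweb.contDiffOn_apply (Fin.castAdd 2 p) q)
    (fun _ hx => det_ne_zero_of_right_inverse (hweb.webCoframe_mul_inv hx)) i j

lemma IsWeb.contDiffOn_coeff (hweb : IsWeb U ωs) (e : Fin (n + 2)) (i : Fin n) :
    ContDiffOn ℝ (⊤ : ℕ∞) (fun x => (ωs e x ᵥ* (webCoframe ωs x)⁻¹) i) U := by
  simp only [vecMul, dotProduct]
  exact ContDiffOn.sum fun k _ => (hweb.contDiffOn_apply e k).mul (hweb.contDiffOn_inv k i)

lemma dsym_sub_dsym (Γ Γ' : Fin n → Fin n → Fin n → (Fin n → ℝ) → ℝ)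
    (ω : (Fin n → ℝ) → Fin n → ℝ) (x : Fin n → ℝ) (i j : Fin n) :
    contraction (fun k i j => Γ' k i j x - Γ k i j x) (ω x) i j =
      dsym Γ ω i j x - dsym Γ' ω i j x := by
  simp only [contraction, of_apply, dsym, sub_mul, Finset.sum_sub_distrib]
  ring

lemma TotallyGeodesic.contraction_sub_eq_zero (hU : IsOpen U)
    {Γ Γ' : Fin n → Fin n → Fin n → (Fin n → ℝ) → ℝ} (hΓ : IsTorsionFreeConn U Γ)
    (hΓ' : IsTorsionFreeConn U Γ') {ω : (Fin n → ℝ) → Fin n → ℝ}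
    (hω : ContDiffOn ℝ (⊤ : ℕ∞) ω U) (h : TotallyGeodesic U Γ ω) (h' : TotallyGeodesic U Γ' ω)
    {x : Fin n → ℝ} (hx : x ∈ U) {v : Fin n → ℝ} (hv : ω x ⬝ᵥ v = 0) :
    v ⬝ᵥ (contraction (fun k i j => Γ' k i j x - Γ k i j x) (ω x) *ᵥ v) = 0 := by
  have e := congrArg₂ (· - ·) (h.sum_dsym_eq_zero hU hΓ hω hx hv)
    (h'.sum_dsym_eq_zero hU hΓ' hω hx hv)
  simp only [sub_zero, ← Finset.sum_sub_distrib] at e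
  rw [← e]
  simp only [dotProduct, mulVec, Finset.mul_sum, dsym_sub_dsym]
  exact Finset.sum_congr rfl fun i _ => Finset.sum_congr rfl fun j _ => by ring

end Web

/-- a pointed `(n+2)`-web whose `(n+1)`-th form is exact, `ω_{n+1} = df`,
determines a unique torsion-free affine connection for which the web is geodesic and `f`
is affine (`d^s_Γ(df) = 0`). -/
theorem statement10 {n : ℕ} (hn : 2 ≤ n) (U : Set (Fin n → ℝ)) (hU : IsOpen U)
    (hUconn : IsConnected U)
    (ωs : Fin (n + 2) → (Fin n → ℝ) → Fin n → ℝ) (hweb : IsWeb U ωs)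
    (f : (Fin n → ℝ) → ℝ) (hf : ContDiffOn ℝ (⊤ : ℕ∞) f U)
    (hdf : ∀ x ∈ U, fderiv ℝ f x ≠ 0)
    (hexact : ∀ x ∈ U, ∀ k, ωs (⟨n, by omega⟩ : Fin (n + 2)) x k =
      fderiv ℝ f x (Pi.single k 1)) :
    ∃ Γ : Fin n → Fin n → Fin n → (Fin n → ℝ) → ℝ,
      (IsTorsionFreeConn U Γ ∧ (∀ i, TotallyGeodesic U Γ (ωs i)) ∧
        ∀ x ∈ U, ∀ i j,
          dsym Γ (fun y k => fderiv ℝ f y (Pi.single k 1)) i j x = 0) ∧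
      ∀ Γ' : Fin n → Fin n → Fin n → (Fin n → ℝ) → ℝ,
        (IsTorsionFreeConn U Γ' ∧ (∀ i, TotallyGeodesic U Γ' (ωs i)) ∧
          ∀ x ∈ U, ∀ i j,
            dsym Γ' (fun y k => fderiv ℝ f y (Pi.single k 1)) i j x = 0) →
        ∀ x ∈ U, ∀ k i j, Γ' k i j x = Γ k i j x := by
  set e : Fin (n + 2) := ⟨n, by omega⟩ with he_def
  have he : ∀ m : Fin n, Fin.castAdd 2 m ≠ e := fun m h => by
    have := congrArg Fin.val h
    simp only [he_def, Fin.val_castAdd] at this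
    omega
  have he' : ∀ m : Fin n, Fin.castAdd 2 m ≠ Fin.last (n + 1) := fun m h => by
    have := congrArg Fin.val h
    simp only [Fin.val_castAdd, Fin.val_last] at this
    omega
  have hee : e ≠ Fin.last (n + 1) := fun h => by
    have := congrArg Fin.val h
    simp only [he_def, Fin.val_last] at this
    omega
  have hcases : ∀ i : Fin (n + 2),
      (∃ m, i = Fin.castAdd 2 m) ∨ i = e ∨ i = Fin.last (n + 1) := fun i => by
    by_cases hi : (i : ℕ) < n
    · exact Or.inl ⟨⟨i, hi⟩, Fin.ext rfl⟩
    · refine Or.inr ?_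
      simp only [he_def, Fin.ext_iff, Fin.val_last]
      omega
  have hdsym : ∀ Γ, ∀ x ∈ U, ∀ i j,
      dsym Γ (fun y k => fderiv ℝ f y (Pi.single k 1)) i j x = dsym Γ (ωs e) i j x :=
    fun Γ x hx i j => dsym_congr hU Γ (fun y hy => funext fun k => (hexact y hy k).symm) hx i j
  obtain ⟨Γ, hΓ, hcoframe, hα, θ, hθ, hβ⟩ := exists_connection_of_general_position hU
    (w := fun m => ωs (Fin.castAdd 2 m)) (P := fun x => (webCoframe ωs x)⁻¹)
    (a := fun i x => Matrix.vecMul (ωs e x) (webCoframe ωs x)⁻¹ i)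
    (b := fun i x => Matrix.vecMul (ωs (Fin.last (n + 1)) x) (webCoframe ωs x)⁻¹ i)
    (fun m => (hweb.1 _).1) hweb.contDiffOn_inv
    (fun x hx i j => by
      simpa [Matrix.mul_apply, Matrix.one_apply, webCoframe] using
        congrFun (congrFun (hweb.webCoframe_mul_inv hx) i) j)
    (fun x hx i j => by
      simpa [Matrix.mul_apply, Matrix.one_apply, webCoframe] using
        congrFun (congrFun (hweb.inv_mul_webCoframe hx) i) j)
    (hweb.contDiffOn_coeff e) (hweb.contDiffOn_coeff _)
    (fun x hx => hweb.coeff_ne_zero hx he) (fun x hx => hweb.coeff_ne_zero hx he')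
    (fun x hx => hweb.coeff_minor_ne_zero hx hee he he')
  have hαe : ∀ x ∈ U, ∀ i j, dsym Γ (ωs e) i j x = 0 := fun x hx i j => by
    rw [← hα x hx i j]
    exact dsym_congr hU Γ (fun y hy => (hweb.sum_coeff_mul hy e).symm) hx i j
  have htg : ∀ i, TotallyGeodesic U Γ (ωs i) := fun i => by
    rcases hcases i with ⟨m, rfl⟩ | rfl | rfl
    · obtain ⟨θ, hθ, h⟩ := hcoframe m
      exact totallyGeodesic_of_dsym_eq_symProd hU (hweb.1 _).1 hθ h
    · exact totallyGeodesic_of_dsym_eq_symProd hU (hweb.1 _).1 (θ := fun _ _ => 0)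
        contDiffOn_const fun x hx p q => by simp [hαe x hx, symProd]
    · refine totallyGeodesic_of_dsym_eq_symProd hU (hweb.1 _).1 hθ fun x hx p q => ?_
      have h := hβ x hx p q
      rw [dsym_congr hU Γ (fun y hy => hweb.sum_coeff_mul hy _) hx] at h
      have hsum := congrFun (hweb.sum_coeff_mul hx (Fin.last (n + 1)))
      rw [h]
      simp only [symProd, hsum]
  refine ⟨Γ, ⟨hΓ, htg, fun x hx i j => by rw [hdsym Γ x hx, hαe x hx]⟩,
    fun Γ' ⟨hΓ', htg', haff'⟩ x hx k i j => sub_eq_zero.1 ?_⟩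
  refine tensor_eq_zero_of_general_position (S := fun k i j => Γ' k i j x - Γ k i j x)
    (hweb.webCoframe_mul_inv hx) (fun k i j => by rw [hΓ'.2, hΓ.2])
    (hweb.coeff_ne_zero hx he) (hweb.coeff_ne_zero hx he')
    (hweb.coeff_minor_ne_zero hx hee he he')
    (fun m v hv => (htg _).contraction_sub_eq_zero hU hΓ hΓ' (hweb.1 _).1 (htg' _) hx hv) ?_
    (fun v hv => (htg _).contraction_sub_eq_zero hU hΓ hΓ' (hweb.1 _).1 (htg' _) hx hv) k i j
  ext p q
  rw [dsym_sub_dsym, hαe x hx, ← hdsym Γ' x hx, haff' x hx, sub_zero, Matrix.zero_apply]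
end

section
/- Let ⟨ω₁, …, ω_d⟩ be a d-web of hypersurfaces on U with d ≥ n + 2, normalized so that ω_{n+1} = −(ω₁ + … + ω_n) and ω_{n+1+k} = −Σᵢ aᵏᵢ ωᵢ for k = 1, …, d − n − 1, where each aᵏᵢ is a smooth nonvanishing function and aᵏᵢ(x) ≠ aᵏⱼ(x) for all i ≠ j and x ∈ U. Then the web is geodesic for some torsion-free affine connection on U if and only if s^{aᵏ}_{ij} = s^{aˡ}_{ij} for all i ≠ j and all k, l ∈ {1, …, d − n − 1}. -/
open scoped BigOperators

/-- The covariant derivative `(∇ω)(v, w)` of the `1`-form `ω` at `x`. -/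
noncomputable def covDeriv {n : ℕ} (Γ : Fin n → Fin n → Fin n → (Fin n → ℝ) → ℝ)
    (ω : (Fin n → ℝ) → Fin n → ℝ) (x v w : Fin n → ℝ) : ℝ :=
  ∑ k, (fderiv ℝ (fun y => ω y k) x v * w k - ω x k * ∑ i, ∑ j, Γ k i j x * v i * w j)

/-- A solution of `deriv f = f * g` on an interval that vanishes at one point vanishes identically. -/
theorem eq_zero_of_hasDerivAt_mul {I : Set ℝ} (hI : IsOpen I) (hc : I.OrdConnected) {t₀ : ℝ}
    (h₀ : t₀ ∈ I) {f g : ℝ → ℝ} (hg : ContinuousOn g I)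
    (hf : ∀ t ∈ I, HasDerivAt f (f t * g t) t) (hf₀ : f t₀ = 0) :
    ∀ t ∈ I, f t = 0 := by
  have hG : ∀ t ∈ I, HasDerivAt (fun u => ∫ s in t₀..u, g s) (g t) t := fun t ht =>
    intervalIntegral.integral_hasDerivAt_right
      ((hg.mono (hc.uIcc_subset h₀ ht)).intervalIntegrable)
      (hg.stronglyMeasurableAtFilter hI t ht) (hg.continuousAt (hI.mem_nhds ht))
  have hd : ∀ t ∈ I,
      HasDerivAt (fun u => f u * Real.exp (-∫ s in t₀..u, g s)) 0 t := fun t ht =>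
    ((hf t ht).mul (hG t ht).neg.exp).congr_deriv (by ring)
  intro t ht
  have h := hI.is_const_of_deriv_eq_zero hc.isPreconnected
    (fun u hu => (hd u hu).differentiableAt.differentiableWithinAt)
    (fun u hu => (hd u hu).deriv) ht h₀
  simpa [hf₀] using h

/-- Along a geodesic, the derivative of `ω(γ̇)` is `(∇ω)(γ̇, γ̇)`. -/
theorem IsGeodesicOn.hasDerivAt_pairing {n : ℕ} {U : Set (Fin n → ℝ)} (hU : IsOpen U)
    {Γ : Fin n → Fin n → Fin n → (Fin n → ℝ) → ℝ} {ω : (Fin n → ℝ) → Fin n → ℝ}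
    (hω : ContDiffOn ℝ (⊤ : ℕ∞) ω U) {I : Set ℝ} (hI : IsOpen I) {γ : ℝ → Fin n → ℝ}
    (hγ : IsGeodesicOn U Γ I γ) {t : ℝ} (ht : t ∈ I) :
    HasDerivAt (fun s => ∑ k, ω (γ s) k * deriv (fun u => γ u k) s)
      (covDeriv Γ ω (γ t) (fun k => deriv (fun u => γ u k) t)
        (fun k => deriv (fun u => γ u k) t)) t := by
  obtain ⟨hγU, hγ2, hgeo⟩ := hγ
  have hk : ∀ k, ContDiffOn ℝ (1 + 1) (fun u => γ u k) I := fun k => by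
    have := contDiffOn_pi.1 hγ2 k
    rwa [one_add_one_eq_two]
  have h1 : ∀ k, HasDerivAt (fun u => γ u k) (deriv (fun u => γ u k) t) t := fun k =>
    (((hk k).differentiableOn (by simp)).differentiableAt (hI.mem_nhds ht)).hasDerivAt
  have h2 : ∀ k, HasDerivAt (deriv (fun u => γ u k))
      (deriv (fun s => deriv (fun u => γ u k) s) t) t := fun k =>
    (((((contDiffOn_succ_iff_deriv_of_isOpen hI).1 (hk k)).2.2).differentiableOn
      (by simp)).differentiableAt (hI.mem_nhds ht)).hasDerivAt
  have hv : HasDerivAt γ (fun k => deriv (fun u => γ u k) t) t := hasDerivAt_pi.2 h1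
  have hωk : ∀ k, HasDerivAt (fun s => ω (γ s) k)
      (fderiv ℝ (fun y => ω y k) (γ t) (fun k => deriv (fun u => γ u k) t)) t := fun k =>
    ((((contDiffOn_pi.1 hω k).differentiableOn (by simp)).differentiableAt
      (hU.mem_nhds (hγU t ht))).hasFDerivAt).comp_hasDerivAt t hv
  refine (HasDerivAt.fun_sum fun k _ => (hωk k).mul (h2 k)).congr_deriv ?_
  rw [covDeriv]
  refine Finset.sum_congr rfl fun k _ => ?_
  rw [eq_neg_of_add_eq_zero_left (hgeo t ht k)]
  ring

/-- If `(∇ω)(v, v) = ω(v) θ(v)` with `θ` continuous, the foliation of `ω` is totally geodesic. -/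
theorem totallyGeodesic_of_covDeriv_eq {n : ℕ} {U : Set (Fin n → ℝ)} (hU : IsOpen U)
    {Γ : Fin n → Fin n → Fin n → (Fin n → ℝ) → ℝ} {ω θ : (Fin n → ℝ) → Fin n → ℝ}
    (hω : ContDiffOn ℝ (⊤ : ℕ∞) ω U) (hθ : ContinuousOn θ U)
    (h : ∀ x ∈ U, ∀ v, covDeriv Γ ω x v v = (∑ k, ω x k * v k) * ∑ k, θ x k * v k) :
    TotallyGeodesic U Γ ω := by
  intro I hI hc h0 γ hγ h00
  have hγc : ContinuousOn γ I := hγ.2.1.continuousOn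
  have hdk : ∀ k, ContinuousOn (deriv (fun u => γ u k)) I := fun k =>
    (contDiffOn_pi.1 hγ.2.1 k).continuousOn_deriv_of_isOpen hI (by norm_num)
  have hθγ : ContinuousOn (fun t => θ (γ t)) I := hθ.comp hγc hγ.1
  refine eq_zero_of_hasDerivAt_mul hI hc h0
    (g := fun t => ∑ k, θ (γ t) k * deriv (fun u => γ u k) t) ?_ (fun t ht => ?_) h00
  · exact continuousOn_finsetSum _ fun k _ => (continuousOn_pi.1 hθγ k).mul (hdk k)
  · rw [← h (γ t) (hγ.1 t ht)]
    exact hγ.hasDerivAt_pairing hU hω hI ht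

/-- Local existence of geodesics with prescribed initial position and velocity. -/
theorem exists_isGeodesicOn {n : ℕ} {U : Set (Fin n → ℝ)} (hU : IsOpen U)
    {Γ : Fin n → Fin n → Fin n → (Fin n → ℝ) → ℝ} (hΓ : IsTorsionFreeConn U Γ)
    {x : Fin n → ℝ} (hx : x ∈ U) (v : Fin n → ℝ) :
    ∃ I : Set ℝ, IsOpen I ∧ I.OrdConnected ∧ (0 : ℝ) ∈ I ∧ ∃ γ : ℝ → Fin n → ℝ,
      IsGeodesicOn U Γ I γ ∧ γ 0 = x ∧ ∀ k, deriv (fun u => γ u k) 0 = v k := by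
  let F : (Fin n → ℝ) × (Fin n → ℝ) → (Fin n → ℝ) × (Fin n → ℝ) := fun p =>
    (p.2, fun k => -∑ i, ∑ j, Γ k i j p.1 * p.2 i * p.2 j)
  have hF : ∀ p : (Fin n → ℝ) × (Fin n → ℝ), p.1 ∈ U → ContDiffAt ℝ 1 F p := by
    intro p hp
    have hG : ∀ k i j, ContDiffAt ℝ 1 (fun q : (Fin n → ℝ) × (Fin n → ℝ) => Γ k i j q.1) p :=
      fun k i j => (((hΓ.1 k i j).contDiffAt (hU.mem_nhds hp)).of_le
        (by exact_mod_cast le_top)).comp p contDiffAt_fst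
    have hs : ∀ i, ContDiffAt ℝ 1 (fun q : (Fin n → ℝ) × (Fin n → ℝ) => q.2 i) p :=
      fun i => contDiffAt_pi.1 contDiffAt_snd i
    exact contDiffAt_snd.prodMk (contDiffAt_pi.2 fun k => (ContDiffAt.sum fun i _ =>
      ContDiffAt.sum fun j _ => ((hG k i j).mul (hs i)).mul (hs j)).neg)
  obtain ⟨α, hα0, ε, hε, hα⟩ :=
    (hF (x, v) hx).exists_forall_mem_closedBall_exists_eq_forall_mem_Ioo_hasDerivAt₀ 0
  have h0 : (0 : ℝ) ∈ Set.Ioo (0 - ε) (0 + ε) := by constructor <;> linarith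
  have hnear : ∀ᶠ t in nhds (0 : ℝ), (α t).1 ∈ U :=
    (continuous_fst.continuousAt.comp (hα 0 h0).continuousAt).eventually_mem
      (by simpa [hα0] using hU.mem_nhds hx)
  obtain ⟨δ, hδ, hball⟩ := Metric.eventually_nhds_iff_ball.1 hnear
  have hαI : ∀ t ∈ Metric.ball (0 : ℝ) (min ε δ), HasDerivAt α (F (α t)) t := by
    intro t ht
    have := Metric.ball_subset_ball (min_le_left ε δ) ht
    rw [Real.ball_eq_Ioo] at this
    exact hα t this
  have hαU : ∀ t ∈ Metric.ball (0 : ℝ) (min ε δ), (α t).1 ∈ U := fun t ht =>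
    hball t (Metric.ball_subset_ball (min_le_right ε δ) ht)
  have hpos : (0 : ℝ) ∈ Metric.ball (0 : ℝ) (min ε δ) := Metric.mem_ball_self (lt_min hε hδ)
  have hopen : IsOpen (Metric.ball (0 : ℝ) (min ε δ)) := Metric.isOpen_ball
  have hord : (Metric.ball (0 : ℝ) (min ε δ)).OrdConnected := by
    rw [Real.ball_eq_Ioo]; exact Set.ordConnected_Ioo
  generalize Metric.ball (0 : ℝ) (min ε δ) = I at *
  have hfst : ∀ t ∈ I, HasDerivAt (fun s => (α s).1) (α t).2 t := fun t ht => (hαI t ht).fst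
  have hsnd : ∀ t ∈ I, HasDerivAt (fun s => (α s).2) (F (α t)).2 t := fun t ht => (hαI t ht).snd
  have hd : ∀ t ∈ I, ∀ k, deriv (fun u => (α u).1 k) t = (α t).2 k := fun t ht k =>
    (hasDerivAt_pi.1 (hfst t ht) k).deriv
  refine ⟨I, hopen, hord, hpos, fun t => (α t).1, ⟨hαU, ?_, ?_⟩, by simp [hα0],
    fun k => by rw [hd 0 hpos k, hα0]⟩
  · have hsnd1 : ContDiffOn ℝ (0 + 1) (fun s => (α s).2) I := by
      refine (contDiffOn_succ_iff_deriv_of_isOpen hopen).2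
        ⟨fun t ht => (hsnd t ht).differentiableAt.differentiableWithinAt, by simp, ?_⟩
      refine contDiffOn_zero.2 (ContinuousOn.congr (f := fun t => (F (α t)).2)
        (fun t ht => ?_) fun t ht => (hsnd t ht).deriv)
      exact (continuous_snd.continuousAt.comp ((hF (α t) (hαU t ht)).continuousAt.comp
        (hαI t ht).continuousAt)).continuousWithinAt
    rw [zero_add] at hsnd1
    rw [← one_add_one_eq_two]
    exact (contDiffOn_succ_iff_deriv_of_isOpen hopen).2
      ⟨fun t ht => (hfst t ht).differentiableAt.differentiableWithinAt, by simp,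
        hsnd1.congr fun t ht => (hfst t ht).deriv⟩
  · intro t ht k
    have hev : (fun s => deriv (fun u => (α u).1 k) s) =ᶠ[nhds t] fun s => (α s).2 k :=
      Filter.eventually_of_mem (hopen.mem_nhds ht) fun s hs => hd s hs k
    rw [hev.deriv_eq, (hasDerivAt_pi.1 (hsnd t ht) k).deriv]
    simp only [hd t ht, F, neg_add_cancel]

/-- If the foliation of `ω` is totally geodesic, then `(∇ω)(v, v) = 0` on the kernel of `ω`. -/
theorem TotallyGeodesic.covDeriv_eq_zero {n : ℕ} {U : Set (Fin n → ℝ)} (hU : IsOpen U)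
    {Γ : Fin n → Fin n → Fin n → (Fin n → ℝ) → ℝ} (hΓ : IsTorsionFreeConn U Γ)
    {ω : (Fin n → ℝ) → Fin n → ℝ} (hω : ContDiffOn ℝ (⊤ : ℕ∞) ω U)
    (h : TotallyGeodesic U Γ ω) {x : Fin n → ℝ} (hx : x ∈ U) {v : Fin n → ℝ}
    (hv : ∑ k, ω x k * v k = 0) : covDeriv Γ ω x v v = 0 := by
  obtain ⟨I, hI, hc, h0, γ, hγ, rfl, hγv⟩ := exists_isGeodesicOn hU hΓ hx v
  have hz := h I hI hc h0 γ hγ (by simpa only [hγv] using hv)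
  have hd := hγ.hasDerivAt_pairing hU hω hI h0
  simp only [hγv] at hd
  refine hd.unique ((hasDerivAt_const (0 : ℝ) (0 : ℝ)).congr_of_eventuallyEq ?_)
  exact Filter.eventually_of_mem (hI.mem_nhds h0) hz

theorem covDeriv_comb_left {n : ℕ} (Γ : Fin n → Fin n → Fin n → (Fin n → ℝ) → ℝ)
    (ω : (Fin n → ℝ) → Fin n → ℝ) (x u v w : Fin n → ℝ) (r s : ℝ) :
    covDeriv Γ ω x (r • u + s • v) w = r * covDeriv Γ ω x u w + s * covDeriv Γ ω x v w := by
  simp only [covDeriv, Finset.mul_sum (a := r), Finset.mul_sum (a := s),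
    ← Finset.sum_add_distrib]
  refine Finset.sum_congr rfl fun k _ => ?_
  have h : ∑ i, ∑ j, Γ k i j x * (r • u + s • v) i * w j =
      r * ∑ i, ∑ j, Γ k i j x * u i * w j + s * ∑ i, ∑ j, Γ k i j x * v i * w j := by
    simp only [Finset.mul_sum, ← Finset.sum_add_distrib]
    refine Finset.sum_congr rfl fun i _ => Finset.sum_congr rfl fun j _ => ?_
    simp only [Pi.add_apply, Pi.smul_apply, smul_eq_mul]
    ring
  rw [h]
  simp only [map_add, map_smul, smul_eq_mul]
  ring

theorem covDeriv_comb_right {n : ℕ} (Γ : Fin n → Fin n → Fin n → (Fin n → ℝ) → ℝ)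
    (ω : (Fin n → ℝ) → Fin n → ℝ) (x u v w : Fin n → ℝ) (r s : ℝ) :
    covDeriv Γ ω x w (r • u + s • v) = r * covDeriv Γ ω x w u + s * covDeriv Γ ω x w v := by
  simp only [covDeriv, Finset.mul_sum (a := r), Finset.mul_sum (a := s),
    ← Finset.sum_add_distrib]
  refine Finset.sum_congr rfl fun k _ => ?_
  have h : ∑ i, ∑ j, Γ k i j x * w i * (r • u + s • v) j =
      r * ∑ i, ∑ j, Γ k i j x * w i * u j + s * ∑ i, ∑ j, Γ k i j x * w i * v j := by
    simp only [Finset.mul_sum, ← Finset.sum_add_distrib]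
    refine Finset.sum_congr rfl fun i _ => Finset.sum_congr rfl fun j _ => ?_
    simp only [Pi.add_apply, Pi.smul_apply, smul_eq_mul]
    ring
  rw [h]
  simp only [Pi.add_apply, Pi.smul_apply, smul_eq_mul]
  ring

/-- The Leibniz rule for the covariant derivative of a linear combination of `1`-forms. -/
theorem covDeriv_sum_mul {n : ℕ} {U : Set (Fin n → ℝ)} (hU : IsOpen U)
    (Γ : Fin n → Fin n → Fin n → (Fin n → ℝ) → ℝ) {ω : (Fin n → ℝ) → Fin n → ℝ}
    {η : Fin n → (Fin n → ℝ) → Fin n → ℝ} {b : Fin n → (Fin n → ℝ) → ℝ}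
    (hη : ∀ i, ContDiffOn ℝ (⊤ : ℕ∞) (η i) U) (hb : ∀ i, ContDiffOn ℝ (⊤ : ℕ∞) (b i) U)
    (hω : ∀ x ∈ U, ∀ m, ω x m = ∑ i, b i x * η i x m) {x : Fin n → ℝ} (hx : x ∈ U)
    (v w : Fin n → ℝ) :
    covDeriv Γ ω x v w =
      ∑ i, (b i x * covDeriv Γ (η i) x v w + fderiv ℝ (b i) x v * ∑ k, η i x k * w k) := by
  have hd : ∀ k, fderiv ℝ (fun y => ω y k) x v =
      ∑ i, (b i x * fderiv ℝ (fun y => η i y k) x v + fderiv ℝ (b i) x v * η i x k) := by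
    intro k
    have hev : (fun y => ω y k) =ᶠ[nhds x] fun y => ∑ i, b i y * η i y k :=
      Filter.eventually_of_mem (hU.mem_nhds hx) fun y hy => hω y hy k
    have hsum : HasFDerivAt (fun y => ∑ i, b i y * η i y k)
        (∑ i, (b i x • fderiv ℝ (fun y => η i y k) x + η i x k • fderiv ℝ (b i) x)) x :=
      HasFDerivAt.fun_sum fun i _ =>
        (((hb i).differentiableOn (by simp)).differentiableAt (hU.mem_nhds hx)).hasFDerivAt.mul
          (((contDiffOn_pi.1 (hη i) k).differentiableOn (by simp)).differentiableAt
            (hU.mem_nhds hx)).hasFDerivAt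
    rw [hev.fderiv_eq, hsum.fderiv]
    simp [mul_comm (η _ x k)]
  have hsplit : ∀ i, b i x * covDeriv Γ (η i) x v w + fderiv ℝ (b i) x v * ∑ k, η i x k * w k =
      ∑ k, ((b i x * fderiv ℝ (fun y => η i y k) x v + fderiv ℝ (b i) x v * η i x k) * w k -
        b i x * η i x k * ∑ p, ∑ q, Γ k p q x * v p * w q) := fun i => by
    rw [covDeriv, Finset.mul_sum, Finset.mul_sum, ← Finset.sum_add_distrib]
    exact Finset.sum_congr rfl fun k _ => by ring
  simp only [hsplit]
  rw [Finset.sum_comm, covDeriv]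
  refine Finset.sum_congr rfl fun k _ => ?_
  rw [hd, hω x hx, Finset.sum_mul, Finset.sum_mul, ← Finset.sum_sub_distrib]

/-- On the diagonal, the covariant derivative is the symmetric covariant differential. -/
theorem covDeriv_self_eq_sum_dsym {n : ℕ} (Γ : Fin n → Fin n → Fin n → (Fin n → ℝ) → ℝ)
    (ω : (Fin n → ℝ) → Fin n → ℝ) (x v : Fin n → ℝ) :
    covDeriv Γ ω x v v = ∑ i, ∑ j, dsym Γ ω i j x * v i * v j := by
  have hpd : ∀ f : (Fin n → ℝ) → ℝ, fderiv ℝ f x v = ∑ i, v i * pd i f x := fun f => by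
    conv_lhs => rw [pi_eq_sum_univ' v]
    simp [pd, map_sum]
  have h1 : ∑ k, fderiv ℝ (fun y => ω y k) x v * v k =
      ∑ i, ∑ j, pd i (fun y => ω y j) x * v i * v j := by
    rw [Finset.sum_comm]
    refine Finset.sum_congr rfl fun k _ => ?_
    rw [hpd, Finset.sum_mul]
    exact Finset.sum_congr rfl fun i _ => by ring
  have h2 : ∑ k, fderiv ℝ (fun y => ω y k) x v * v k =
      ∑ i, ∑ j, pd j (fun y => ω y i) x * v i * v j := by
    refine Finset.sum_congr rfl fun k _ => ?_
    rw [hpd, Finset.sum_mul]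
    exact Finset.sum_congr rfl fun i _ => by ring
  have h3 : ∑ k, ω x k * ∑ i, ∑ j, Γ k i j x * v i * v j =
      ∑ i, ∑ j, (∑ k, Γ k i j x * ω x k) * v i * v j := by
    simp only [Finset.mul_sum, Finset.sum_mul]
    rw [Finset.sum_comm]
    refine Finset.sum_congr rfl fun i _ => ?_
    rw [Finset.sum_comm]
    exact Finset.sum_congr rfl fun j _ => Finset.sum_congr rfl fun k _ => by ring
  have h4 : ∑ i, ∑ j, dsym Γ ω i j x * v i * v j =
      (∑ i, ∑ j, pd i (fun y => ω y j) x * v i * v j +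
        ∑ i, ∑ j, pd j (fun y => ω y i) x * v i * v j) / 2 -
      ∑ i, ∑ j, (∑ k, Γ k i j x * ω x k) * v i * v j := by
    simp only [← Finset.sum_add_distrib, Finset.sum_div, ← Finset.sum_sub_distrib]
    refine Finset.sum_congr rfl fun i _ => Finset.sum_congr rfl fun j _ => ?_
    rw [dsym]
    ring
  rw [h4, ← h1, ← h2, ← h3, covDeriv, Finset.sum_sub_distrib]
  ring

theorem sum_symProd {n : ℕ} (θ ω : (Fin n → ℝ) → Fin n → ℝ) (x v : Fin n → ℝ) :
    ∑ i, ∑ j, symProd θ ω i j x * v i * v j = (∑ k, ω x k * v k) * ∑ k, θ x k * v k := by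
  have h : ∑ i, ∑ j, symProd θ ω i j x * v i * v j =
      ((∑ k, θ x k * v k) * (∑ k, ω x k * v k) + (∑ k, ω x k * v k) * ∑ k, θ x k * v k) / 2 := by
    simp only [Finset.sum_mul_sum, ← Finset.sum_add_distrib, Finset.sum_div]
    refine Finset.sum_congr rfl fun i _ => Finset.sum_congr rfl fun j _ => ?_
    rw [symProd]
    ring
  rw [h]
  ring

theorem ContDiffOn.pd {n : ℕ} {U : Set (Fin n → ℝ)} (hU : IsOpen U) {f : (Fin n → ℝ) → ℝ}
    (hf : ContDiffOn ℝ (⊤ : ℕ∞) f U) (i : Fin n) : ContDiffOn ℝ (⊤ : ℕ∞) (pd i f) U :=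
  (hf.fderiv_of_isOpen hU (by simp)).clm_apply contDiffOn_const

/-- For a coframe `η` and prescribed `1`-forms `θ`, there is a torsion-free connection with
`(∇ηₘ)(v, v) = ηₘ(v) θₘ(v)` for all `m`. -/
theorem exists_isTorsionFreeConn_covDeriv_eq {n : ℕ} {U : Set (Fin n → ℝ)} (hU : IsOpen U)
    {η X θ : Fin n → (Fin n → ℝ) → Fin n → ℝ} (hX : IsDualFrame U η X)
    (hη : ∀ i, ContDiffOn ℝ (⊤ : ℕ∞) (η i) U) (hθ : ∀ i, ContDiffOn ℝ (⊤ : ℕ∞) (θ i) U) :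
    ∃ Γ, IsTorsionFreeConn U Γ ∧ ∀ m, ∀ x ∈ U, ∀ v,
      covDeriv Γ (η m) x v v = (∑ k, η m x k * v k) * ∑ k, θ m x k * v k := by
  have hηk : ∀ m k, ContDiffOn ℝ (⊤ : ℕ∞) (fun y => η m y k) U := fun m => contDiffOn_pi.1 (hη m)
  have hθk : ∀ m k, ContDiffOn ℝ (⊤ : ℕ∞) (fun y => θ m y k) U := fun m => contDiffOn_pi.1 (hθ m)
  refine ⟨fun k i j x => ∑ m, X m x k *
    ((pd i (fun y => η m y j) x + pd j (fun y => η m y i) x) / 2 - symProd (θ m) (η m) i j x),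
    ⟨fun k i j => ?_, fun k i j x => ?_⟩, fun m x hx v => ?_⟩
  · refine ContDiffOn.sum fun m _ => (contDiffOn_pi.1 (hX.1 m) k).mul (ContDiffOn.sub ?_ ?_)
    · exact (((hηk m j).pd hU i).add ((hηk m i).pd hU j)).div_const 2
    · exact (((hθk m i).mul (hηk m j)).add ((hθk m j).mul (hηk m i))).div_const 2
  · refine Finset.sum_congr rfl fun m _ => ?_
    simp only [symProd]
    ring
  · rw [covDeriv_self_eq_sum_dsym, ← sum_symProd]
    refine Finset.sum_congr rfl fun i _ => Finset.sum_congr rfl fun j _ => ?_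
    congr 2
    rw [dsym, sub_eq_iff_eq_add', ← sub_eq_iff_eq_add]
    simp only [Finset.sum_mul]
    rw [Finset.sum_comm]
    have : ∀ p, ∑ k, X p x k * ((pd i (fun y => η p y j) x + pd j (fun y => η p y i) x) / 2 -
        symProd (θ p) (η p) i j x) * η m x k = (if m = p then 1 else 0) *
        ((pd i (fun y => η p y j) x + pd j (fun y => η p y i) x) / 2 -
        symProd (θ p) (η p) i j x) := fun p => by
      rw [← hX.2 x hx m p, Finset.sum_mul]
      exact Finset.sum_congr rfl fun k _ => by ring
    simp [this]

/-- Expansion of a vector in the frame dual to a coframe. -/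
theorem IsDualFrame.sum_smul_eq {n : ℕ} {U : Set (Fin n → ℝ)}
    {η X : Fin n → (Fin n → ℝ) → Fin n → ℝ} (hX : IsDualFrame U η X) {x : Fin n → ℝ}
    (hx : x ∈ U) (v : Fin n → ℝ) : ∑ i, (∑ k, η i x k * v k) • X i x = v := by
  have h : (Matrix.of fun i k => η i x k) * (Matrix.of fun k j => X j x k) = 1 := by
    ext i j
    rw [Matrix.mul_apply, Matrix.one_apply]
    exact hX.2 x hx i j
  rw [mul_eq_one_comm] at h
  have h' := congrArg (fun M => Matrix.mulVec M v) h
  simp only [← Matrix.mulVec_mulVec, Matrix.one_mulVec] at h'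
  ext l
  rw [← congrFun h' l]
  simp [Matrix.mulVec, dotProduct, Finset.sum_apply, mul_comm]

theorem sum_sum_eq_zero_of_antisymm {n : ℕ} {F : Fin n → Fin n → ℝ}
    (hF : ∀ i j, F i j + F j i = 0) : ∑ i, ∑ j, F i j = 0 := by
  have h : ∑ i, ∑ j, F i j + ∑ i, ∑ j, F j i = 0 := by
    simp only [← Finset.sum_add_distrib, hF, Finset.sum_const_zero]
  rw [Finset.sum_comm (f := fun i j => F j i)] at h
  linarith

/-- A criterion for the foliation of `∑ bᵢ ηᵢ` to be totally geodesic. -/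
theorem totallyGeodesic_sum_mul {n : ℕ} {U : Set (Fin n → ℝ)} (hU : IsOpen U)
    {Γ : Fin n → Fin n → Fin n → (Fin n → ℝ) → ℝ} {ω : (Fin n → ℝ) → Fin n → ℝ}
    {η X : Fin n → (Fin n → ℝ) → Fin n → ℝ} (hX : IsDualFrame U η X)
    (hη : ∀ i, ContDiffOn ℝ (⊤ : ℕ∞) (η i) U) {b ρ : Fin n → (Fin n → ℝ) → ℝ}
    (hωs : ContDiffOn ℝ (⊤ : ℕ∞) ω U)
    (hb : ∀ i, ContDiffOn ℝ (⊤ : ℕ∞) (b i) U) (hρ : ∀ i, ContinuousOn (ρ i) U)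
    (hω : ∀ x ∈ U, ∀ m, ω x m = ∑ i, b i x * η i x m)
    {S : Fin n → Fin n → (Fin n → ℝ) → ℝ}
    (hS : ∀ m, ∀ x ∈ U, ∀ v, covDeriv Γ (η m) x v v =
      (∑ k, η m x k * v k) * ∑ k, (∑ p, S m p x * η p x k) * v k)
    (hT : ∀ x ∈ U, ∀ i j, (fderiv ℝ (b i) x (X j x) + b i x * S i j x - b i x * ρ j x) +
      (fderiv ℝ (b j) x (X i x) + b j x * S j i x - b j x * ρ i x) = 0) :
    TotallyGeodesic U Γ ω := by
  have hpair : ∀ (c : Fin n → ℝ) (x v : Fin n → ℝ),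
      ∑ k, (∑ p, c p * η p x k) * v k = ∑ p, c p * ∑ k, η p x k * v k := fun c x v => by
    simp only [Finset.sum_mul, Finset.mul_sum]
    rw [Finset.sum_comm]
    exact Finset.sum_congr rfl fun p _ => Finset.sum_congr rfl fun k _ => by ring
  refine totallyGeodesic_of_covDeriv_eq hU (θ := fun x k => ∑ j, ρ j x * η j x k) hωs ?_ ?_
  · exact continuousOn_pi.2 fun k => continuousOn_finsetSum _ fun j _ =>
      (hρ j).mul (contDiffOn_pi.1 (hη j) k).continuousOn
  · intro x hx v
    have hdv : ∀ i, fderiv ℝ (b i) x v =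
        ∑ j, (∑ k, η j x k * v k) * fderiv ℝ (b i) x (X j x) := fun i => by
      conv_lhs => rw [← hX.sum_smul_eq hx v]
      simp [map_sum]
    rw [covDeriv_sum_mul hU Γ hη hb hω hx]
    simp only [hS _ x hx, hω x hx, hpair, hdv]
    generalize hc : (fun j => ∑ k, η j x k * v k) = c
    have hc' : ∀ j, ∑ k, η j x k * v k = c j := fun j => congrFun hc j
    simp only [hc']
    rw [← sub_eq_zero, Finset.sum_mul_sum, ← Finset.sum_sub_distrib]
    rw [← sum_sum_eq_zero_of_antisymm (F := fun i j => c i * c j *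
      (fderiv ℝ (b i) x (X j x) + b i x * S i j x - b i x * ρ j x))
      fun i j => by linear_combination c i * c j * hT x hx i j]
    refine Finset.sum_congr rfl fun i _ => ?_
    simp only [Finset.mul_sum, Finset.sum_mul, ← Finset.sum_add_distrib, ← Finset.sum_sub_distrib]
    exact Finset.sum_congr rfl fun j _ => by ring

/-- The invariant `s^a_{ij}` is determined by any connection for which the coframe, the sum of
the coframe and `∑ aᵢ ηᵢ` have vanishing covariant derivative on the diagonal of their kernels. -/
theorem sInv_eq_of_covDeriv_eq_zero {n : ℕ} {U : Set (Fin n → ℝ)} (hU : IsOpen U)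
    {Γ : Fin n → Fin n → Fin n → (Fin n → ℝ) → ℝ} {ω₁ ω₂ : (Fin n → ℝ) → Fin n → ℝ}
    {η X : Fin n → (Fin n → ℝ) → Fin n → ℝ} (hX : IsDualFrame U η X)
    (hη : ∀ i, ContDiffOn ℝ (⊤ : ℕ∞) (η i) U) {a : Fin n → (Fin n → ℝ) → ℝ}
    (ha : ∀ i, ContDiffOn ℝ (⊤ : ℕ∞) (a i) U) {x : Fin n → ℝ} (hx : x ∈ U)
    (hanz : ∀ i, a i x ≠ 0) {i j : Fin n} (hij : i ≠ j) (hane : a i x ≠ a j x)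
    (hω₁ : ∀ x ∈ U, ∀ m, ω₁ x m = -∑ i, η i x m)
    (hω₂ : ∀ x ∈ U, ∀ m, ω₂ x m = -∑ i, a i x * η i x m)
    (h : ∀ m v, ∑ k, η m x k * v k = 0 → covDeriv Γ (η m) x v v = 0)
    (h₁ : ∀ v, ∑ k, ω₁ x k * v k = 0 → covDeriv Γ ω₁ x v v = 0)
    (h₂ : ∀ v, ∑ k, ω₂ x k * v k = 0 → covDeriv Γ ω₂ x v v = 0) :
    sInv X a i j x = covDeriv Γ (η i) x (X i x) (X j x) + covDeriv Γ (η i) x (X j x) (X i x) -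
      covDeriv Γ (η j) x (X j x) (X j x) := by
  have hpair : ∀ m (r s : ℝ), ∑ k, η m x k * (r • X i x + s • X j x) k =
      r * (if m = i then 1 else 0) + s * (if m = j then 1 else 0) := fun m r s => by
    rw [← hX.2 x hx m i, ← hX.2 x hx m j, Finset.mul_sum, Finset.mul_sum,
      ← Finset.sum_add_distrib]
    refine Finset.sum_congr rfl fun k _ => ?_
    simp only [Pi.add_apply, Pi.smul_apply, smul_eq_mul]
    ring
  have hcov : ∀ m (r s : ℝ), covDeriv Γ (η m) x (r • X i x + s • X j x) (r • X i x + s • X j x) =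
      r ^ 2 * covDeriv Γ (η m) x (X i x) (X i x) +
      r * s * (covDeriv Γ (η m) x (X i x) (X j x) + covDeriv Γ (η m) x (X j x) (X i x)) +
      s ^ 2 * covDeriv Γ (η m) x (X j x) (X j x) := fun m r s => by
    simp only [covDeriv_comb_left, covDeriv_comb_right]
    ring
  have hii : covDeriv Γ (η i) x (X j x) (X j x) = 0 :=
    h i _ (by rw [hX.2 x hx i j, if_neg hij])
  have hjj : covDeriv Γ (η j) x (X i x) (X i x) = 0 :=
    h j _ (by rw [hX.2 x hx j i, if_neg hij.symm])
  -- The test vectors are `b j • X i - b i • X j`, for `b = 1` and for `b = a`.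
  have key : ∀ {ω : (Fin n → ℝ) → Fin n → ℝ} {b : Fin n → (Fin n → ℝ) → ℝ},
      (∀ i, ContDiffOn ℝ (⊤ : ℕ∞) (b i) U) →
      (∀ x ∈ U, ∀ m, ω x m = -∑ i, b i x * η i x m) →
      (∀ v, ∑ k, ω x k * v k = 0 → covDeriv Γ ω x v v = 0) →
      b i x * (b j x ^ 2 * covDeriv Γ (η i) x (X i x) (X i x) + b j x * (-b i x) *
          (covDeriv Γ (η i) x (X i x) (X j x) + covDeriv Γ (η i) x (X j x) (X i x))) +
        (b j x * fderiv ℝ (b i) x (X i x) - b i x * fderiv ℝ (b i) x (X j x)) * b j x +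
      (b j x * (b j x * (-b i x) * (covDeriv Γ (η j) x (X i x) (X j x) +
          covDeriv Γ (η j) x (X j x) (X i x)) +
          b i x ^ 2 * covDeriv Γ (η j) x (X j x) (X j x)) +
        (b j x * fderiv ℝ (b j) x (X i x) - b i x * fderiv ℝ (b j) x (X j x)) * (-b i x)) = 0 := by
    intro ω b hb hω h0
    have hω' : ∀ x ∈ U, ∀ m, ω x m = ∑ i, (-b i x) * η i x m := fun x hx m => by
      simp [hω x hx m]
    have hz := h0 (b j x • X i x + (-b i x) • X j x) (by
      have : ∀ v : Fin n → ℝ, ∑ k, ω x k * v k = ∑ p, (-b p x) * ∑ k, η p x k * v k := fun v => by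
        simp only [hω' x hx, Finset.sum_mul, Finset.mul_sum]
        rw [Finset.sum_comm]
        exact Finset.sum_congr rfl fun p _ => Finset.sum_congr rfl fun k _ => by ring
      rw [this]
      simp only [hpair]
      rw [Fintype.sum_eq_add i j hij fun m hm => by simp [hm.1, hm.2]]
      simp [hij, hij.symm]
      ring)
    rw [covDeriv_sum_mul hU Γ hη (b := fun i x => -b i x) (fun i => (hb i).neg) hω' hx,
      Fintype.sum_eq_add i j hij fun m hm => by
        rw [h m _ (by rw [hpair]; simp [hm.1, hm.2]), hpair]; simp [hm.1, hm.2]] at hz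
    simp only [hpair, hcov, hii, hjj, hij, hij.symm, fderiv_fun_neg, map_add, map_smul,
      neg_apply, if_true, if_false, smul_eq_mul] at hz
    linear_combination -hz
  have e₁ := key (b := fun _ _ => 1) (fun _ => contDiffOn_const) (by simpa using hω₁) h₁
  have e₂ := key ha hω₂ h₂
  simp at e₁
  have hai := hanz i
  have haj := hanz j
  have hsub := sub_ne_zero.2 hane
  rw [sInv]
  field_simp
  linear_combination e₂ - a i x * a j x ^ 2 * e₁

theorem sInv_antisymm {n : ℕ} (X : Fin n → (Fin n → ℝ) → Fin n → ℝ)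
    {a : Fin n → (Fin n → ℝ) → ℝ} {i j : Fin n} {x : Fin n → ℝ} (h : a i x ≠ a j x) :
    sInv X a i j x + sInv X a j i x = 0 := by
  have h₁ := sub_ne_zero.2 h
  rw [sInv, sInv, ← neg_sub (a i x) (a j x)]
  field_simp
  ring

theorem sInv_mul_symm {n : ℕ} (X : Fin n → (Fin n → ℝ) → Fin n → ℝ)
    {a : Fin n → (Fin n → ℝ) → ℝ} {i j : Fin n} {x : Fin n → ℝ} (hi : a i x ≠ 0)
    (hj : a j x ≠ 0) (h : a i x ≠ a j x) :
    (fderiv ℝ (a i) x (X j x) + a i x * sInv X a i j x -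
        a i x * (fderiv ℝ (a j) x (X j x) / a j x)) +
      (fderiv ℝ (a j) x (X i x) + a j x * sInv X a j i x -
        a j x * (fderiv ℝ (a i) x (X i x) / a i x)) = 0 := by
  have h₁ := sub_ne_zero.2 h
  rw [eq_neg_of_add_eq_zero_right (sInv_antisymm X h), sInv]
  field_simp
  ring

theorem contDiffOn_sInv {n : ℕ} {U : Set (Fin n → ℝ)} (hU : IsOpen U)
    {X : Fin n → (Fin n → ℝ) → Fin n → ℝ} (hX : ∀ i, ContDiffOn ℝ (⊤ : ℕ∞) (X i) U)
    {a : Fin n → (Fin n → ℝ) → ℝ} (ha : ∀ i, ContDiffOn ℝ (⊤ : ℕ∞) (a i) U)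
    (hanz : ∀ i, ∀ x ∈ U, a i x ≠ 0) {i j : Fin n} (h : ∀ x ∈ U, a i x ≠ a j x) :
    ContDiffOn ℝ (⊤ : ℕ∞) (sInv X a i j) U := by
  have hq : ∀ p q, ContDiffOn ℝ (⊤ : ℕ∞) (fun x => fderiv ℝ (a p) x (X q x) / a p x) U :=
    fun p q => (((ha p).fderiv_of_isOpen hU (by simp)).clm_apply (hX q)).div (ha p) (hanz p)
  exact (contDiffOn_const.div ((ha i).sub (ha j)) fun x hx => sub_ne_zero.2 (h x hx)).mul
    (((ha i).mul ((hq j j).sub (hq i j))).sub ((ha j).mul ((hq j i).sub (hq i i))))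

/-- a normalized `d`-web (`d ≥ n+2`) of hypersurfaces is geodesic for some
torsion-free affine connection iff all its basic invariants agree:
`s^{aᵏ}_{ij} = s^{aˡ}_{ij}` for all `i ≠ j` and all `k, l`. -/
theorem statement11 {n d : ℕ} (hn : 2 ≤ n) (hd : n + 2 ≤ d)
    (U : Set (Fin n → ℝ)) (hU : IsOpen U) (hUconn : IsConnected U)
    (ωs : Fin d → (Fin n → ℝ) → Fin n → ℝ) (hweb : IsWeb U ωs)
    (X : Fin n → (Fin n → ℝ) → Fin n → ℝ)
    (hX : IsDualFrame U (fun i => ωs (Fin.castLE (by omega) i)) X)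
    (a : Fin (d - n - 1) → Fin n → (Fin n → ℝ) → ℝ)
    (hasm : ∀ k i, ContDiffOn ℝ (⊤ : ℕ∞) (a k i) U)
    (hanz : ∀ k i, ∀ x ∈ U, a k i x ≠ 0)
    (hane : ∀ k, ∀ i j, i ≠ j → ∀ x ∈ U, a k i x ≠ a k j x)
    (hnorm1 : ∀ x ∈ U, ∀ m, ωs (⟨n, by omega⟩ : Fin d) x m =
      -(∑ i : Fin n, ωs (Fin.castLE (by omega) i) x m))
    (hnorm2 : ∀ k : Fin (d - n - 1), ∀ x ∈ U, ∀ m,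
      ωs (⟨n + 1 + k.val, by have := k.isLt; omega⟩ : Fin d) x m =
        -(∑ i : Fin n, a k i x * ωs (Fin.castLE (by omega) i) x m)) :
    (∃ Γ : Fin n → Fin n → Fin n → (Fin n → ℝ) → ℝ,
        IsTorsionFreeConn U Γ ∧ ∀ i, TotallyGeodesic U Γ (ωs i)) ↔
      ∀ k l : Fin (d - n - 1), ∀ i j : Fin n, i ≠ j → ∀ x ∈ U,
        sInv X (a k) i j x = sInv X (a l) i j x := by
  have hωsm : ∀ i, ContDiffOn ℝ (⊤ : ℕ∞) (ωs i) U := fun i => (hweb.1 i).1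
  constructor
  · rintro ⟨Γ, hΓ, hgeo⟩ k l i j hij x hx
    have hker : ∀ m v, ∑ p, ωs m x p * v p = 0 → covDeriv Γ (ωs m) x v v = 0 :=
      fun m v hv => (hgeo m).covDeriv_eq_zero hU hΓ (hωsm m) hx hv
    have hs : ∀ k, _ := fun k => sInv_eq_of_covDeriv_eq_zero hU hX (fun i => hωsm _) (hasm k) hx
      (fun i => hanz k i x hx) hij (hane k i j hij x hx) hnorm1 (hnorm2 k)
      (fun m => hker _) (hker _) (hker _)
    rw [hs k, hs l]
  · intro hinv
    let k₀ : Fin (d - n - 1) := ⟨0, by omega⟩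
    let S : Fin n → Fin n → (Fin n → ℝ) → ℝ := fun m p x =>
      if m = p then 0 else sInv X (a k₀) m p x
    have hSsm : ∀ m p, ContDiffOn ℝ (⊤ : ℕ∞) (S m p) U := fun m p => by
      by_cases hmp : m = p
      · simpa only [S, hmp, if_true] using contDiffOn_const
      · simpa only [S, hmp, if_false] using
          contDiffOn_sInv hU hX.1 (hasm k₀) (hanz k₀) (hane k₀ m p hmp)
    obtain ⟨Γ, hΓ, hcov⟩ := exists_isTorsionFreeConn_covDeriv_eq hU hX (fun i => hωsm _)
      (θ := fun m x k => ∑ p, S m p x * ωs (Fin.castLE (by omega) p) x k)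
      fun m => contDiffOn_pi.2 fun k => ContDiffOn.sum fun p _ =>
        (hSsm m p).mul (contDiffOn_pi.1 (hωsm _) k)
    refine ⟨Γ, hΓ, fun m => ?_⟩
    rcases lt_trichotomy m.val n with hm | hm | hm
    · refine totallyGeodesic_of_covDeriv_eq hU (hωsm m) ?_ (hcov ⟨m, hm⟩)
      exact continuousOn_pi.2 fun k => continuousOn_finsetSum _ fun p _ =>
        (hSsm _ p).continuousOn.mul (contDiffOn_pi.1 (hωsm _) k).continuousOn
    · rw [show m = ⟨n, by omega⟩ from Fin.ext hm]
      refine totallyGeodesic_sum_mul hU hX (fun i => hωsm _) (b := fun _ _ => -1)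
        (ρ := fun _ _ => 0) (hωsm _) (fun _ => contDiffOn_const) (fun _ => continuousOn_const)
        (fun x hx p => by simp [hnorm1 x hx p]) hcov fun x hx i j => ?_
      by_cases hij : i = j
      · simp [S, hij]
      · have := sInv_antisymm X (hane k₀ i j hij x hx)
        simp only [S, hij, Ne.symm hij, if_false, fderiv_fun_const, Pi.zero_apply, zero_apply]
        linear_combination -this
    · obtain ⟨k, hk⟩ : ∃ k : Fin (d - n - 1), m.val = n + 1 + k.val :=
        ⟨⟨m - n - 1, by omega⟩, by simp only; omega⟩
      rw [show m = ⟨n + 1 + k.val, by omega⟩ from Fin.ext hk]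
      refine totallyGeodesic_sum_mul hU hX (fun i => hωsm _) (b := fun i x => -a k i x)
        (ρ := fun j x => fderiv ℝ (a k j) x (X j x) / a k j x) (hωsm _)
        (fun i => (hasm k i).neg) (fun j => ?_)
        (fun x hx p => by simp [hnorm2 k x hx p]) hcov fun x hx i j => ?_
      · exact (((hasm k j).fderiv_of_isOpen hU (by simp)).clm_apply (hX.1 j)
          (n := (⊤ : ℕ∞))).continuousOn.div (hasm k j).continuousOn (hanz k j)
      · have hi := hanz k i x hx
        by_cases hij : i = j
        · subst hij
          simp only [S, if_true, fderiv_fun_neg, neg_apply]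
          field_simp
          ring
        · have := sInv_mul_symm X hi (hanz k j x hx) (hane k i j hij x hx)
          simp only [S, hij, Ne.symm hij, if_false, fderiv_fun_neg, neg_apply,
            hinv k₀ k i j hij x hx, hinv k₀ k j i (Ne.symm hij) x hx]
          linear_combination -this
end
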